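/- There exists δ₀ > 0 such that for every δ ∈ (0, δ₀) there is a constant C(δ) with the following property: for all sufficiently large X, setting D = X^{5/9}, z = X^{5/36}, w = X^δ, E = X^{1/1000}, one has Σ_{d ≤ DE} d·( Σ_{m ≤ DE, d | m} α_m⁻/m )² ≤ C(δ)/log X. -/

import Mathlib

open scoped Classical

/-- Generic (β-)sieve weight: for squarefree `d = p₁⋯p_r` with primes
`lo ≤ p_r < ⋯ < p₁ < hi` satisfying `p₁⋯p_m·p_m^β < lvl` for all `m ≤ r` of the
prescribed parity (odd if `useOdd`, even otherwise), the weight is `μ(d)`;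
otherwise it is `0` (and `1` gets weight `μ(1) = 1`). With `β = 2` these are the
linear sieve weights `λ^±`, with `β = 30` the β-sieve weights `ρ^±`. -/
noncomputable def sieveWeight (lo hi lvl : ℝ) (β : ℕ) (useOdd : Bool) (d : ℕ) : ℝ :=
  if Squarefree d ∧ (∀ p ∈ d.primeFactors, lo ≤ (p : ℝ) ∧ (p : ℝ) < hi) ∧
      (∀ m : ℕ, 1 ≤ m → m ≤ d.primeFactorsList.length →
        (if useOdd then Odd m else Even m) →
        (((d.primeFactorsList.reverse.take m).prod : ℕ) : ℝ) *
          ((d.primeFactorsList.reverse.getD (m - 1) 1 : ℕ) : ℝ) ^ β < lvl)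
  then (ArithmeticFunction.moebius d : ℝ) else 0

/-- `(k, P(lo,hi))`: the product of the distinct primes `p ∣ k` with `lo ≤ p < hi`. -/
noncomputable def gcdPart (lo hi : ℝ) (k : ℕ) : ℕ :=
  ∏ p ∈ k.primeFactors.filter (fun p : ℕ => lo ≤ (p : ℝ) ∧ (p : ℝ) < hi), p

/-- `k ∣ P(z)`: `k` is squarefree with all prime factors `< z`. -/
def dividesPrimorial (z : ℝ) (k : ℕ) : Prop :=
  Squarefree k ∧ ∀ p ∈ k.primeFactors, (p : ℝ) < z

/-- The lower-bound vector-sieve weight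
`α_k⁻ = 1_{k ∣ P(z)}(λ⁺_{(k,P(w,z))}ρ⁻_{(k,P(w))} + λ⁻_{(k,P(w,z))}ρ⁺_{(k,P(w))}
  − λ⁺_{(k,P(w,z))}ρ⁺_{(k,P(w))})`. -/
noncomputable def alphaMinus (w z D E : ℝ) (k : ℕ) : ℝ :=
  (if dividesPrimorial z k then 1 else 0) *
    (sieveWeight w z D 2 true (gcdPart w z k) * sieveWeight 0 w E 30 false (gcdPart 0 w k)
      + sieveWeight w z D 2 false (gcdPart w z k) * sieveWeight 0 w E 30 true (gcdPart 0 w k)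
      - sieveWeight w z D 2 true (gcdPart w z k) * sieveWeight 0 w E 30 true (gcdPart 0 w k))

/-!
Encoding a squarefree number by its set of prime factors, each term of `α⁻` becomes a product of a
weight `λ` of the primes in `[w, z)` and a weight `ρ` of the primes below `w`, and the quadratic
form factors accordingly. The factor of the large primes only needs `|λ| ≤ 1`: by Mertens it is
at most a power of `log z / log w`, a constant depending on `δ`.

The saving `1 / log w` comes from the small primes. For `ρ = μ` the form is the Euler product
`∏ (1 - 1/p + 1/p²)`. In general `ρ - μ` is a sum over the prime `q` at which the truncation
condition first fails; given `q`, the smaller primes contribute `μ`, hence a factor `1 / log q`,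
while a failure at `q` forces at least a large multiple of `log (log w / log q)` prime factors in
`[q, w)`, which gains a high power of `log q / log w`. A Cauchy–Schwarz inequality with weights
multiplicative in `d` then makes the sum over `q` converge to `O(1 / log w)`.
-/

/-! ### Mertens' estimates -/

/-- The Mertens product `∏_{p < N} (1 - 1/p)`, which measures the density of the integers free of
prime factors below `N`. -/
noncomputable def mertensProduct (N : ℕ) : ℝ :=
  ∏ p ∈ Nat.primesBelow N, (1 - 1 / (p : ℝ))

lemma one_div_prime_le_half {p : ℕ} (hp : p.Prime) : 1 / (p : ℝ) ≤ 1 / 2 :=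
  one_div_le_one_div_of_le two_pos (by exact_mod_cast hp.two_le)

lemma one_sub_one_div_prime_pos {p : ℕ} (hp : p.Prime) : 0 < 1 - 1 / (p : ℝ) := by
  linarith [one_div_prime_le_half hp]

lemma mertensProduct_pos (N : ℕ) : 0 < mertensProduct N :=
  Finset.prod_pos fun _ hp => one_sub_one_div_prime_pos (Nat.prime_of_mem_primesBelow hp)

lemma sum_log_primeFactors_le (n : ℕ) : ∑ p ∈ n.primeFactors, Real.log p ≤ Real.log n := by
  rcases n.eq_zero_or_pos with rfl | hn
  · simp
  have hpos : ∀ p ∈ n.primeFactors, (0 : ℝ) < p := fun p hp => by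
    exact_mod_cast (Nat.prime_of_mem_primeFactors hp).pos
  rw [← Real.log_prod fun p hp => (hpos p hp).ne']
  refine Real.log_le_log (Finset.prod_pos hpos) ?_
  rw [← Nat.cast_prod]
  exact_mod_cast Nat.le_of_dvd hn (Nat.prod_primeFactors_dvd n)

-- Both sides are compared with `∑_{n ≤ N} ∑_{p ∣ n} log p`.
lemma sum_log_mul_div_le (N : ℕ) :
    ∑ p ∈ Nat.primesBelow (N + 1), Real.log p * (N / p : ℕ) ≤ N * Real.log N := by
  have hfactors : ∀ n ∈ Finset.Ioc 0 N,
      (Nat.primesBelow (N + 1)).filter (· ∣ n) = n.primeFactors := by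
    intro n hn
    rw [Finset.mem_Ioc] at hn
    ext p
    simp only [Finset.mem_filter, Nat.mem_primesBelow, Nat.mem_primeFactors]
    refine ⟨fun h => ⟨h.1.2, h.2, by lia⟩, fun h => ⟨⟨?_, h.1⟩, h.2.1⟩⟩
    have := Nat.le_of_dvd hn.1 h.2.1
    lia
  calc ∑ p ∈ Nat.primesBelow (N + 1), Real.log p * (N / p : ℕ)
      = ∑ n ∈ Finset.Ioc 0 N, ∑ p ∈ (Nat.primesBelow (N + 1)).filter (· ∣ n), Real.log p := by
        simp_rw [Finset.sum_filter]
        rw [Finset.sum_comm]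
        refine Finset.sum_congr rfl fun p _ => ?_
        rw [← Finset.sum_filter, Finset.sum_const, Nat.Ioc_filter_dvd_card_eq_div, nsmul_eq_mul,
          mul_comm]
    _ ≤ ∑ _n ∈ Finset.Ioc 0 N, Real.log N := by
        refine Finset.sum_le_sum fun n hn => ?_
        rw [hfactors n hn]
        rw [Finset.mem_Ioc] at hn
        exact (sum_log_primeFactors_le n).trans
          (Real.log_le_log (by exact_mod_cast hn.1) (by exact_mod_cast hn.2))
    _ = N * Real.log N := by simp

lemma sum_log_div_le {N : ℕ} (hN : 1 ≤ N) :
    ∑ p ∈ Nat.primesBelow N, Real.log p / p ≤ Real.log N + Real.log 4 := by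
  have hN₀ : (0 : ℝ) < N := by exact_mod_cast hN
  have htheta : ∑ p ∈ Nat.primesBelow (N + 1), Real.log p ≤ Real.log 4 * N := by
    have h := Chebyshev.theta_le_log4_mul_x (x := (N : ℝ)) hN₀.le
    rwa [Chebyshev.theta_eq_sum_primesLE_log] at h
  have hfloor : ∀ p ∈ Nat.primesBelow (N + 1),
      Real.log p / p * N ≤ Real.log p * (N / p : ℕ) + Real.log p := by
    intro p _
    have h : (N : ℝ) / p ≤ (N / p : ℕ) + 1 := by
      rw [← Nat.floor_div_eq_div (K := ℝ)]
      exact (Nat.lt_floor_add_one _).le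
    calc Real.log p / p * N = Real.log p * (N / p) := by ring
      _ ≤ Real.log p * ((N / p : ℕ) + 1) := by gcongr
      _ = _ := by ring
  have hmono : ∑ p ∈ Nat.primesBelow N, Real.log p / p
      ≤ ∑ p ∈ Nat.primesBelow (N + 1), Real.log p / p :=
    Finset.sum_le_sum_of_subset_of_nonneg (Nat.primesBelow_mono N.le_succ)
      fun p _ _ => by positivity
  refine hmono.trans (le_of_mul_le_mul_right ?_ hN₀)
  calc (∑ p ∈ Nat.primesBelow (N + 1), Real.log p / p) * N
      ≤ ∑ p ∈ Nat.primesBelow (N + 1), (Real.log p * (N / p : ℕ) + Real.log p) := by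
        rw [Finset.sum_mul]
        exact Finset.sum_le_sum hfloor
    _ ≤ N * Real.log N + Real.log 4 * N := by
        rw [Finset.sum_add_distrib]
        exact add_le_add (sum_log_mul_div_le N) htheta
    _ = (Real.log N + Real.log 4) * N := by ring

lemma sum_log_div_le_three_mul_log {N : ℕ} (hN : 2 ≤ N) :
    ∑ p ∈ Nat.primesBelow N, Real.log p / p ≤ 3 * Real.log N := by
  have h4 : Real.log 4 = 2 * Real.log 2 := by
    rw [show (4 : ℝ) = 2 ^ 2 by norm_num, Real.log_pow]
    norm_cast
  have h2 : Real.log 2 ≤ Real.log N := Real.log_le_log two_pos (by exact_mod_cast hN)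
  linarith [sum_log_div_le (one_le_two.trans hN)]

-- By the Euler product, the inverse of the left side exceeds `∑_{n < N} 1/n`.
lemma mertensProduct_le {N : ℕ} (hN : 2 ≤ N) : mertensProduct N ≤ 1 / Real.log N := by
  let f : ℕ →* ℝ :=
    { toFun := fun n => (n : ℝ)⁻¹, map_one' := by simp, map_mul' := by intros; simp [mul_comm] }
  have hlt : ∀ {p : ℕ}, p.Prime → ‖f p‖ < 1 := fun {p} hp => by
    simpa [f] using inv_lt_one_of_one_lt₀ (Nat.one_lt_cast.2 hp.one_lt)
  have hprod : ∏ p ∈ N.primesBelow, (1 - f p)⁻¹ = (mertensProduct N)⁻¹ := by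
    simp [f, mertensProduct, Finset.prod_inv_distrib]
  have hEuler := hasSum_subtype_iff_indicator (f := f).1
    (EulerProduct.summable_and_hasSum_smoothNumbers_prod_primesBelow_geometric hlt N).2
  rw [hprod] at hEuler
  have hharmonic : (harmonic (N - 1) : ℝ) ≤ (mertensProduct N)⁻¹ := by
    refine le_trans (le_of_eq ?_) (sum_le_hasSum (Finset.Icc 1 (N - 1))
      (fun n _ => Set.indicator_nonneg (fun m _ => by simp [f]) n) hEuler)
    rw [harmonic_eq_sum_Icc]
    push_cast
    refine Finset.sum_congr rfl fun n hn => ?_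
    rw [Finset.mem_Icc] at hn
    rw [Set.indicator_of_mem (Nat.mem_smoothNumbers_of_lt (by lia) (by lia))]
    rfl
  have hlog : Real.log N ≤ harmonic (N - 1) := by
    have h := log_add_one_le_harmonic (N - 1)
    rwa [Nat.sub_add_cancel (by lia)] at h
  rw [one_div]
  exact le_inv_of_le_inv₀ (Real.log_pos (by exact_mod_cast hN)) (hlog.trans hharmonic)

lemma tsum_one_div_rpow_le {s : ℝ} (hs : 1 < s) :
    ∑' n : ℕ, 1 / (n + 1 : ℝ) ^ s ≤ 1 + 1 / (s - 1) := by
  have h := ZetaAsymptotics.zeta_limit_aux1 hs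
  have : 0 ≤ ZetaAsymptotics.termTSum s := tsum_nonneg fun n => ZetaAsymptotics.term_nonneg _ _
  nlinarith

lemma one_sub_rpow_neg_le {x ε : ℝ} (hx : 2 ≤ x) (hε : 0 ≤ ε) :
    1 - x ^ (-(1 + ε)) ≤ (1 - 1 / x) * Real.exp (2 * ε * (Real.log x / x)) := by
  have hx₀ : 0 < x := by linarith
  have hlog : 0 ≤ ε * (Real.log x / x) :=
    mul_nonneg hε (div_nonneg (Real.log_nonneg (by linarith)) hx₀.le)
  have hhalf : 1 / x ≤ 1 / 2 := one_div_le_one_div_of_le two_pos hx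
  have hrpow : 1 / x - ε * (Real.log x / x) ≤ x ^ (-(1 + ε)) := by
    calc 1 / x - ε * (Real.log x / x) = x⁻¹ * (Real.log x * -ε + 1) := by ring
      _ ≤ x⁻¹ * Real.exp (Real.log x * -ε) := by gcongr; exact Real.add_one_le_exp _
      _ = x ^ (-(1 + ε)) := by
          rw [neg_add, Real.rpow_add hx₀, Real.rpow_neg_one, Real.rpow_def_of_pos hx₀]
  calc 1 - x ^ (-(1 + ε)) ≤ (1 - 1 / x) * (2 * ε * (Real.log x / x) + 1) := by nlinarith
    _ ≤ _ := by gcongr; exacts [by linarith, Real.add_one_le_exp _]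

lemma prod_one_sub_rpow_inv_le (N : ℕ) {ε : ℝ} (hε : 0 < ε) :
    (∏ p ∈ Nat.primesBelow N, (1 - (p : ℝ) ^ (-(1 + ε))))⁻¹ ≤ 1 + 1 / ε := by
  let f : ℕ →*₀ ℝ :=
    { toFun := fun n => (n : ℝ) ^ (-(1 + ε))
      map_zero' := by
        push_cast
        exact Real.zero_rpow (by linarith)
      map_one' := by simp
      map_mul' := fun m n => by
        push_cast
        rw [Real.mul_rpow (by positivity) (by positivity)] }
  have hsum : Summable f := Real.summable_nat_rpow.2 (by linarith)
  calc (∏ p ∈ Nat.primesBelow N, (1 - (p : ℝ) ^ (-(1 + ε))))⁻¹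
      = ∑' m : N.smoothNumbers, f m := by
        rw [← Finset.prod_inv_distrib]
        exact EulerProduct.prod_primesBelow_geometric_eq_tsum_smoothNumbers (f := (f : ℕ →* ℝ))
          hsum N
    _ ≤ ∑' n, f n := hsum.tsum_subtype_le f _ fun n => Real.rpow_nonneg n.cast_nonneg _
    _ = ∑' n : ℕ, 1 / (n + 1 : ℝ) ^ (1 + ε) := by
        rw [hsum.tsum_eq_zero_add, map_zero, zero_add]
        refine tsum_congr fun n => ?_
        rw [one_div, ← Real.rpow_neg (by positivity), ← Nat.cast_add_one]
        rfl
    _ ≤ 1 + 1 / ε := by simpa using tsum_one_div_rpow_le (s := 1 + ε) (by linarith)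

lemma one_sub_prime_rpow_neg_pos {p : ℕ} (hp : p.Prime) {ε : ℝ} (hε : 0 ≤ ε) :
    0 < 1 - (p : ℝ) ^ (-(1 + ε)) :=
  sub_pos.2 (Real.rpow_lt_one_of_one_lt_of_neg (by exact_mod_cast hp.one_lt) (by linarith))

lemma prod_one_sub_rpow_le (N : ℕ) {ε : ℝ} (hε : 0 ≤ ε) :
    ∏ p ∈ Nat.primesBelow N, (1 - (p : ℝ) ^ (-(1 + ε)))
      ≤ mertensProduct N * Real.exp (2 * ε * ∑ p ∈ Nat.primesBelow N, Real.log p / p) := by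
  rw [Finset.mul_sum, Real.exp_sum, mertensProduct, ← Finset.prod_mul_distrib]
  refine Finset.prod_le_prod (fun p hp => ?_) fun p hp => ?_
  all_goals have hp := Nat.prime_of_mem_primesBelow hp
  · exact (one_sub_prime_rpow_neg_pos hp hε).le
  · exact one_sub_rpow_neg_le (by exact_mod_cast hp.two_le) hε

-- Rankin's trick: the product is compared with the Euler product of `ζ` at `1 + 1 / log N`.
lemma le_mertensProduct {N : ℕ} (hN : 2 ≤ N) :
    Real.exp (-6) / 3 / Real.log N ≤ mertensProduct N := by
  have hlog2 : Real.log 2 ≤ Real.log N := Real.log_le_log two_pos (by exact_mod_cast hN)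
  have hlog : 1 / 2 < Real.log N := by linarith [Real.log_two_gt_d9]
  set ε := 1 / Real.log N with hε
  have hε₀ : 0 < ε := by positivity
  set Q := ∏ p ∈ Nat.primesBelow N, (1 - (p : ℝ) ^ (-(1 + ε)))
  have hQ : 0 < Q := Finset.prod_pos fun p hp => one_sub_prime_rpow_neg_pos
    (Nat.prime_of_mem_primesBelow hp) hε₀.le
  have hQ_le : Q ≤ mertensProduct N * Real.exp 6 := by
    calc Q ≤ mertensProduct N * Real.exp (2 * ε * ∑ p ∈ Nat.primesBelow N, Real.log p / p) :=
          prod_one_sub_rpow_le N hε₀.le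
      _ ≤ mertensProduct N * Real.exp (2 * ε * (3 * Real.log N)) := by
          have := mertensProduct_pos N
          gcongr
          exact sum_log_div_le_three_mul_log hN
      _ = mertensProduct N * Real.exp 6 := by
          rw [hε]
          field_simp
          norm_num
  have hQ_ge : 1 / (3 * Real.log N) ≤ Q := by
    rw [one_div]
    refine inv_le_of_inv_le₀ hQ ((prod_one_sub_rpow_inv_le N hε₀).trans ?_)
    rw [hε, one_div_one_div]
    linarith
  calc Real.exp (-6) / 3 / Real.log N = 1 / (3 * Real.log N) * Real.exp (-6) := by
        field_simp
    _ ≤ mertensProduct N * Real.exp 6 * Real.exp (-6) := by gcongr; exact hQ_ge.trans hQ_le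
    _ = mertensProduct N := by rw [mul_assoc, ← Real.exp_add]; simp

lemma one_add_div_le_inv_pow {p : ℕ} (hp : p.Prime) (k : ℕ) :
    1 + k / (p : ℝ) ≤ ((1 - 1 / (p : ℝ))⁻¹) ^ k := by
  have hinv : (0 : ℝ) ≤ 1 / p := by positivity
  calc 1 + k / (p : ℝ) = 1 + k * (1 / (p : ℝ)) := by ring
    _ ≤ (1 + 1 / (p : ℝ)) ^ k := one_add_mul_le_pow (by linarith) k
    _ ≤ ((1 - 1 / (p : ℝ))⁻¹) ^ k := by
        gcongr
        rw [← one_div, le_div_iff₀ (one_sub_one_div_prime_pos hp)]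
        nlinarith

lemma prod_inv_one_sub_primesBelow_sdiff {M N : ℕ} (hMN : M ≤ N) :
    ∏ p ∈ Nat.primesBelow N \ Nat.primesBelow M, (1 - 1 / (p : ℝ))⁻¹
      = mertensProduct M / mertensProduct N := by
  have h := Finset.prod_sdiff (Nat.primesBelow_mono hMN) (f := fun p : ℕ => 1 - 1 / (p : ℝ))
  rw [Finset.prod_inv_distrib, mertensProduct, mertensProduct, ← h]
  exact (div_mul_cancel_right₀ (mertensProduct_pos M).ne' _).symm

lemma exists_prod_le_log_div_log_pow :
    ∃ C : ℝ, 0 < C ∧ ∀ {M N : ℕ} (k : ℕ) {S : Finset ℕ} {f : ℕ → ℝ}, 2 ≤ M → M ≤ N →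
      (∀ p ∈ S, p.Prime ∧ M ≤ p ∧ p < N) → (∀ p ∈ S, 0 ≤ f p ∧ f p ≤ 1 + k / (p : ℝ)) →
      ∏ p ∈ S, f p ≤ (C * (Real.log N / Real.log M)) ^ k := by
  refine ⟨3 * Real.exp 6, by positivity, fun {M N} k {S f} hM hMN hS hf => ?_⟩
  have hlogM : 0 < Real.log M := Real.log_pos (by exact_mod_cast hM)
  have hlogN : 0 < Real.log N := Real.log_pos (by exact_mod_cast hM.trans hMN)
  calc ∏ p ∈ S, f p ≤ ∏ p ∈ S, ((1 - 1 / (p : ℝ))⁻¹) ^ k :=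
        Finset.prod_le_prod (fun p hp => (hf p hp).1) fun p hp =>
          (hf p hp).2.trans (one_add_div_le_inv_pow (hS p hp).1 k)
    _ ≤ ∏ p ∈ Nat.primesBelow N \ Nat.primesBelow M, ((1 - 1 / (p : ℝ))⁻¹) ^ k := by
        refine Finset.prod_le_prod_of_subset_of_one_le (fun p hp => ?_) (fun p hp => ?_)
          fun p hp _ => ?_
        · simpa [Nat.mem_primesBelow, (hS p hp).1, (hS p hp).2.2] using (hS p hp).2.1
        · have := one_sub_one_div_prime_pos (hS p hp).1
          positivity
        · have hp := Nat.prime_of_mem_primesBelow (Finset.mem_sdiff.1 hp).1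
          exact one_le_pow₀ ((one_le_inv₀ (one_sub_one_div_prime_pos hp)).2
            (sub_le_self _ (by positivity)))
    _ = (mertensProduct M / mertensProduct N) ^ k := by
        rw [Finset.prod_pow, prod_inv_one_sub_primesBelow_sdiff hMN]
    _ ≤ (1 / Real.log M / (Real.exp (-6) / 3 / Real.log N)) ^ k := by
        have := mertensProduct_pos M
        have := mertensProduct_pos N
        gcongr
        exacts [mertensProduct_le hM, le_mertensProduct (hM.trans hMN)]
    _ = (3 * Real.exp 6 * (Real.log N / Real.log M)) ^ k := by
        rw [Real.exp_neg]
        field_simp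

-- Each factor equals `1 - 1/p + 1/p²`.
lemma exists_prod_inv_add_sq_le :
    ∃ C : ℝ, 0 < C ∧ ∀ {N : ℕ}, 2 ≤ N →
      ∏ p ∈ Nat.primesBelow N, (1 / (p : ℝ) + (1 - 1 / (p : ℝ)) ^ 2) ≤ C / Real.log N := by
  have hsum : Summable fun n : ℕ => 2 / (n : ℝ) ^ 2 :=
    (Real.summable_one_div_nat_pow.2 one_lt_two).mul_left 2 |>.congr fun n => by ring
  refine ⟨Real.exp (∑' n : ℕ, 2 / (n : ℝ) ^ 2), Real.exp_pos _, fun {N} hN => ?_⟩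
  have hfactor : ∀ p ∈ Nat.primesBelow N, 1 / (p : ℝ) + (1 - 1 / (p : ℝ)) ^ 2
      ≤ (1 - 1 / (p : ℝ)) * Real.exp (2 / (p : ℝ) ^ 2) := by
    intro p hp
    have hhalf := one_div_prime_le_half (Nat.prime_of_mem_primesBelow hp)
    calc 1 / (p : ℝ) + (1 - 1 / (p : ℝ)) ^ 2
        ≤ (1 - 1 / (p : ℝ)) * (2 / (p : ℝ) ^ 2 + 1) := by
          have h : (2 : ℝ) / p ^ 2 = 2 * (1 / p) ^ 2 := by ring
          rw [h]
          nlinarith [sq_nonneg (1 / (p : ℝ))]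
      _ ≤ _ := by gcongr; exacts [by linarith, Real.add_one_le_exp _]
  calc ∏ p ∈ Nat.primesBelow N, (1 / (p : ℝ) + (1 - 1 / (p : ℝ)) ^ 2)
      ≤ ∏ p ∈ Nat.primesBelow N, ((1 - 1 / (p : ℝ)) * Real.exp (2 / (p : ℝ) ^ 2)) :=
        Finset.prod_le_prod (fun p _ => by positivity) hfactor
    _ = mertensProduct N * Real.exp (∑ p ∈ Nat.primesBelow N, 2 / (p : ℝ) ^ 2) := by
        rw [Finset.prod_mul_distrib, Real.exp_sum, mertensProduct]
    _ ≤ 1 / Real.log N * Real.exp (∑' n : ℕ, 2 / (n : ℝ) ^ 2) := by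
        have : 0 ≤ Real.log N := Real.log_natCast_nonneg N
        gcongr
        exacts [mertensProduct_le hN, hsum.sum_le_tsum _ fun _ _ => by positivity]
    _ = Real.exp (∑' n : ℕ, 2 / (n : ℝ) ^ 2) / Real.log N := by ring

/-! ### Sums over subsets -/

section Subsets

variable {α : Type*}

lemma filter_filter_of_imp {p q : α → Prop} [DecidablePred p] [DecidablePred q]
    (h : ∀ x, q x → p x) (S : Finset α) : (S.filter p).filter q = S.filter q := by
  rw [Finset.filter_filter]
  exact Finset.filter_congr fun x _ => and_iff_right_of_imp (h x)

lemma filter_min'_lt [LinearOrder α] {S : Finset α} (hS : S.Nonempty) :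
    S.filter (S.min' hS < ·) = S.erase (S.min' hS) := by
  ext p
  rw [Finset.mem_filter, Finset.mem_erase, and_comm]
  exact and_congr_left fun hp => ⟨ne_of_gt, fun hne => lt_of_le_of_ne (S.min'_le p hp) hne.symm⟩

lemma sum_filter_le_sub_filter_lt [LinearOrder α] {M : Type*} [AddCommGroup M]
    (F : Finset α → M) (S : Finset α) :
    ∑ q ∈ S, (F (S.filter (q ≤ ·)) - F (S.filter (q < ·))) = F S - F ∅ := by
  induction S using Finset.induction_on_min with
  | empty => simp
  | insert a S ha ih =>
    have haS : a ∉ S := fun h => lt_irrefl a (ha a h)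
    have hle : (insert a S).filter (a ≤ ·) = insert a S :=
      Finset.filter_true_of_mem fun x hx =>
        (Finset.mem_insert.1 hx).elim (fun h => h.ge) fun h => (ha x h).le
    have hlt : (insert a S).filter (a < ·) = S := by
      rw [Finset.filter_insert, if_neg (lt_irrefl a), Finset.filter_true_of_mem ha]
    have hrest : ∀ q ∈ S, F ((insert a S).filter (q ≤ ·)) - F ((insert a S).filter (q < ·))
        = F (S.filter (q ≤ ·)) - F (S.filter (q < ·)) := fun q hq => by
      rw [Finset.filter_insert, if_neg (ha q hq).not_ge, Finset.filter_insert,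
        if_neg (ha q hq).not_gt]
    rw [Finset.sum_insert haS, hle, hlt, Finset.sum_congr rfl hrest, ih, sub_add_sub_cancel]

lemma sum_Icc_prod_mul_prod_sdiff [DecidableEq α] {R : Type*} [CommSemiring R] (a b : α → R)
    {T P : Finset α} (hT : T ⊆ P) :
    ∑ S ∈ Finset.Icc T P, (∏ p ∈ S, a p) * ∏ p ∈ P \ S, b p
      = (∏ p ∈ T, a p) * ∏ p ∈ P \ T, (a p + b p) := by
  have hdisj : ∀ A ∈ (P \ T).powerset, Disjoint T A := fun A hA =>
    Finset.disjoint_sdiff.mono_right (Finset.mem_powerset.1 hA)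
  rw [Finset.Icc_eq_image_powerset hT, Finset.sum_image, Finset.prod_add, Finset.mul_sum]
  · refine Finset.sum_congr rfl fun A hA => ?_
    rw [Finset.prod_union (hdisj A hA), mul_assoc, sdiff_sdiff_left, Finset.sup_eq_union]
  · intro A hA B hB hAB
    rw [← Finset.union_sdiff_cancel_left (hdisj A hA),
      ← Finset.union_sdiff_cancel_left (hdisj B hB)]
    exact congrArg (· \ T) hAB

lemma sum_Icc_sdiff_inter [DecidableEq α] {M : Type*} [AddCommMonoid M]
    (F : Finset α → Finset α → M) {U P : Finset α} (hU : U ⊆ P) (T : Finset α) :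
    ∑ S ∈ Finset.Icc T P, F (S \ U) (S ∩ U)
      = ∑ A ∈ Finset.Icc (T \ U) (P \ U), ∑ B ∈ Finset.Icc (T ∩ U) U, F A B := by
  rw [← Finset.sum_product']
  refine Finset.sum_nbij' (fun S => (S \ U, S ∩ U)) (fun AB => AB.1 ∪ AB.2) ?_ ?_ ?_ ?_ ?_
  · intro S hS
    rw [Finset.mem_Icc] at hS
    simp only [Finset.mem_product, Finset.mem_Icc]
    exact ⟨⟨Finset.sdiff_subset_sdiff hS.1 subset_rfl, Finset.sdiff_subset_sdiff hS.2 subset_rfl⟩,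
      Finset.inter_subset_inter_right hS.1, Finset.inter_subset_right⟩
  · rintro ⟨A, B⟩ hAB
    simp only [Finset.mem_product, Finset.mem_Icc] at hAB ⊢
    obtain ⟨⟨hTA, hAP⟩, hTB, hBU⟩ := hAB
    refine ⟨?_, Finset.union_subset (hAP.trans Finset.sdiff_subset) (hBU.trans hU)⟩
    rw [← Finset.sdiff_union_inter T U]
    exact Finset.union_subset_union hTA hTB
  · intro S _
    exact Finset.sdiff_union_inter S U
  · rintro ⟨A, B⟩ hAB
    simp only [Finset.mem_product, Finset.mem_Icc] at hAB
    obtain ⟨⟨-, hAP⟩, -, hBU⟩ := hAB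
    have hA : Disjoint A U := Finset.disjoint_of_subset_left hAP Finset.sdiff_disjoint
    rw [Finset.union_sdiff_distrib, Finset.union_inter_distrib_right, hA.sdiff_eq_left,
      Finset.sdiff_eq_empty_iff_subset.2 hBU, Finset.disjoint_iff_inter_eq_empty.1 hA,
      Finset.inter_eq_left.2 hBU, Finset.union_empty, Finset.empty_union]
  · intro S _
    rfl

lemma sum_powerset_sdiff_mul_inter [DecidableEq α] {R : Type*} [NonUnitalNonAssocSemiring R]
    (F G : Finset α → R) {U P : Finset α} (hU : U ⊆ P) :
    ∑ T ∈ P.powerset, F (T \ U) * G (T ∩ U)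
      = (∑ A ∈ (P \ U).powerset, F A) * ∑ B ∈ U.powerset, G B := by
  have hIcc : ∀ S : Finset α, Finset.Icc ∅ S = S.powerset := fun S =>
    Finset.Icc_bot.trans (Finset.Iic_eq_powerset S)
  simpa only [hIcc, Finset.empty_sdiff, Finset.empty_inter, Finset.sum_mul_sum]
    using sum_Icc_sdiff_inter (fun A B => F A * G B) hU ∅

end Subsets

/-! ### Mean squares of functions on squarefree numbers -/

/-- The sum `∑ f(k)/k` over `d ∣ k ∣ n`, where a squarefree number is encoded by the set of its
prime factors: `P`, `S` and `T` stand for `n`, `k` and `d`. -/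
noncomputable def multipleSum (P : Finset ℕ) (f : Finset ℕ → ℝ) (T : Finset ℕ) : ℝ :=
  ∑ S ∈ Finset.Icc T P, f S / ∏ p ∈ S, (p : ℝ)

/-- The quadratic form `∑ s(d) t(n/d) (∑ f(k)/k)²` over `d ∣ n`, with inner sum over `d ∣ k ∣ n` and
multiplicative weights given by the values of `s` and `t` on primes; squarefree numbers are encoded
by sets of primes as in `multipleSum`. -/
noncomputable def weightedMeanSquare (s t : ℕ → ℝ) (P : Finset ℕ) (f : Finset ℕ → ℝ) : ℝ :=
  ∑ T ∈ P.powerset, ((∏ p ∈ T, s p) * ∏ p ∈ P \ T, t p) * multipleSum P f T ^ 2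

/-- The quadratic form `∑ d (∑ f(k)/k)²` over `d ∣ n`, with inner sum over `d ∣ k ∣ n`. -/
noncomputable def meanSquare (P : Finset ℕ) (f : Finset ℕ → ℝ) : ℝ :=
  weightedMeanSquare (fun p => p) 1 P f

lemma meanSquare_eq_sum (P : Finset ℕ) (f : Finset ℕ → ℝ) :
    meanSquare P f = ∑ T ∈ P.powerset, (∏ p ∈ T, (p : ℝ)) * multipleSum P f T ^ 2 := by
  simp [meanSquare, weightedMeanSquare]

section MeanSquare

variable {P U T : Finset ℕ} {s t : ℕ → ℝ} {f g : Finset ℕ → ℝ}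

lemma multipleSum_congr (h : ∀ S ⊆ P, f S = g S) (T : Finset ℕ) :
    multipleSum P f T = multipleSum P g T :=
  Finset.sum_congr rfl fun S hS => by rw [h S (Finset.mem_Icc.1 hS).2]

lemma multipleSum_sum {ι : Type*} (I : Finset ι) (g : ι → Finset ℕ → ℝ) :
    multipleSum P (fun S => ∑ i ∈ I, g i S) T = ∑ i ∈ I, multipleSum P (g i) T := by
  simp only [multipleSum, Finset.sum_div]
  exact Finset.sum_comm

lemma multipleSum_add :
    multipleSum P (fun S => f S + g S) T = multipleSum P f T + multipleSum P g T := by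
  simp only [multipleSum, add_div, Finset.sum_add_distrib]

lemma multipleSum_sdiff_mul_inter (l r : Finset ℕ → ℝ) (hU : U ⊆ P) :
    multipleSum P (fun S => l (S \ U) * r (S ∩ U)) T
      = multipleSum (P \ U) l (T \ U) * multipleSum U r (T ∩ U) := by
  have hterm : ∀ S : Finset ℕ, l (S \ U) * r (S ∩ U) / ∏ p ∈ S, (p : ℝ)
      = l (S \ U) / (∏ p ∈ S \ U, (p : ℝ)) * (r (S ∩ U) / ∏ p ∈ S ∩ U, (p : ℝ)) := fun S => by
    rw [div_mul_div_comm, mul_comm (∏ p ∈ S \ U, (p : ℝ)), Finset.prod_inter_mul_prod_sdiff]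
  simp only [multipleSum, hterm]
  rw [sum_Icc_sdiff_inter
    (fun A B => l A / (∏ p ∈ A, (p : ℝ)) * (r B / ∏ p ∈ B, (p : ℝ))) hU, Finset.sum_mul_sum]

lemma multipleSum_neg_one_pow_card (hT : T ⊆ P) :
    multipleSum P (fun S => (-1) ^ S.card) T
      = (∏ p ∈ T, (-1 / (p : ℝ))) * ∏ p ∈ P \ T, (1 - 1 / (p : ℝ)) := by
  calc multipleSum P (fun S => (-1) ^ S.card) T
      = ∑ S ∈ Finset.Icc T P, (∏ p ∈ S, (-1 / (p : ℝ))) * ∏ p ∈ P \ S, 1 := by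
        simp [multipleSum, Finset.prod_div_distrib]
    _ = (∏ p ∈ T, (-1 / (p : ℝ))) * ∏ p ∈ P \ T, (1 - 1 / (p : ℝ)) := by
        rw [sum_Icc_prod_mul_prod_sdiff _ _ hT]
        congr 1
        exact Finset.prod_congr rfl fun p _ => by ring

lemma abs_multipleSum_le {c : ℝ} {x y : ℕ → ℝ}
    (hf : ∀ S ⊆ P, |f S| ≤ c * ((∏ p ∈ S, x p) * ∏ p ∈ P \ S, y p)) (hT : T ⊆ P) :
    |multipleSum P f T| ≤ c * ((∏ p ∈ T, x p / p) * ∏ p ∈ P \ T, (x p / p + y p)) := by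
  calc |multipleSum P f T| ≤ ∑ S ∈ Finset.Icc T P, |f S / ∏ p ∈ S, (p : ℝ)| :=
        Finset.abs_sum_le_sum_abs _ _
    _ ≤ ∑ S ∈ Finset.Icc T P, c * ((∏ p ∈ S, x p / p) * ∏ p ∈ P \ S, y p) := by
        refine Finset.sum_le_sum fun S hS => ?_
        have hprod : (0 : ℝ) ≤ ∏ p ∈ S, (p : ℝ) := Finset.prod_nonneg fun p _ => p.cast_nonneg
        rw [abs_div, abs_of_nonneg hprod, Finset.prod_div_distrib, div_mul_eq_mul_div,
          mul_div_assoc']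
        gcongr
        exact hf S (Finset.mem_Icc.1 hS).2
    _ = _ := by rw [← Finset.mul_sum, sum_Icc_prod_mul_prod_sdiff _ _ hT]

lemma weightedMeanSquare_nonneg (hs : ∀ p ∈ P, 0 ≤ s p) (ht : ∀ p ∈ P, 0 ≤ t p)
    (f : Finset ℕ → ℝ) : 0 ≤ weightedMeanSquare s t P f :=
  Finset.sum_nonneg fun _ hT => mul_nonneg
    (mul_nonneg (Finset.prod_nonneg fun p hp => hs p (Finset.mem_powerset.1 hT hp))
      (Finset.prod_nonneg fun p hp => ht p (Finset.mem_sdiff.1 hp).1)) (sq_nonneg _)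

lemma meanSquare_nonneg (P : Finset ℕ) (f : Finset ℕ → ℝ) : 0 ≤ meanSquare P f :=
  weightedMeanSquare_nonneg (fun p _ => p.cast_nonneg) (fun _ _ => zero_le_one) f

lemma weightedMeanSquare_congr (h : ∀ S ⊆ P, f S = g S) :
    weightedMeanSquare s t P f = weightedMeanSquare s t P g := by
  simp only [weightedMeanSquare, multipleSum_congr h]

lemma weightedMeanSquare_congr_weights {s' t' : ℕ → ℝ} (hs : ∀ p ∈ P, s p = s' p)
    (ht : ∀ p ∈ P, t p = t' p) : weightedMeanSquare s t P f = weightedMeanSquare s' t' P f :=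
  Finset.sum_congr rfl fun T hT => by
    rw [Finset.prod_congr rfl fun p hp => hs p (Finset.mem_powerset.1 hT hp),
      Finset.prod_congr rfl fun p hp => ht p (Finset.mem_sdiff.1 hp).1]

lemma meanSquare_congr (h : ∀ S ⊆ P, f S = g S) : meanSquare P f = meanSquare P g :=
  weightedMeanSquare_congr h

lemma meanSquare_neg (P : Finset ℕ) (f : Finset ℕ → ℝ) :
    meanSquare P (fun S => -f S) = meanSquare P f := by
  simp only [meanSquare_eq_sum, multipleSum, neg_div, Finset.sum_neg_distrib, neg_sq]

lemma meanSquare_add_le (P : Finset ℕ) (f g : Finset ℕ → ℝ) :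
    meanSquare P (fun S => f S + g S) ≤ 2 * (meanSquare P f + meanSquare P g) := by
  simp only [meanSquare_eq_sum, multipleSum_add]
  rw [← Finset.sum_add_distrib, Finset.mul_sum]
  refine Finset.sum_le_sum fun T _ => ?_
  calc (∏ p ∈ T, (p : ℝ)) * (multipleSum P f T + multipleSum P g T) ^ 2
      ≤ (∏ p ∈ T, (p : ℝ)) * (2 * (multipleSum P f T ^ 2 + multipleSum P g T ^ 2)) := by
        gcongr
        exact add_sq_le
    _ = _ := by ring

lemma weightedMeanSquare_sdiff_mul_inter (s t : ℕ → ℝ) (l r : Finset ℕ → ℝ) (hU : U ⊆ P) :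
    weightedMeanSquare s t P (fun S => l (S \ U) * r (S ∩ U))
      = weightedMeanSquare s t (P \ U) l * weightedMeanSquare s t U r := by
  rw [weightedMeanSquare, weightedMeanSquare, weightedMeanSquare,
    ← sum_powerset_sdiff_mul_inter _ _ hU]
  refine Finset.sum_congr rfl fun T _ => ?_
  have hsdiff : (P \ U) \ (T \ U) = (P \ T) \ U := by
    ext p
    simp only [Finset.mem_sdiff]
    tauto
  have hinter : U \ (T ∩ U) = (P \ T) ∩ U := by
    ext p
    simp only [Finset.mem_sdiff, Finset.mem_inter]
    have := @hU p
    tauto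
  rw [multipleSum_sdiff_mul_inter l r hU, hsdiff, hinter,
    ← Finset.prod_inter_mul_prod_sdiff T U s, ← Finset.prod_inter_mul_prod_sdiff (P \ T) U t]
  ring

lemma meanSquare_sdiff_mul_inter (l r : Finset ℕ → ℝ) (hU : U ⊆ P) :
    meanSquare P (fun S => l (S \ U) * r (S ∩ U)) = meanSquare (P \ U) l * meanSquare U r :=
  weightedMeanSquare_sdiff_mul_inter _ _ l r hU

lemma weightedMeanSquare_le_prod (hs : ∀ p ∈ P, 0 ≤ s p) (ht : ∀ p ∈ P, 0 ≤ t p) {c : ℝ}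
    {a b : ℕ → ℝ}
    (hf : ∀ T ⊆ P, |multipleSum P f T| ≤ c * ((∏ p ∈ T, a p) * ∏ p ∈ P \ T, b p)) :
    weightedMeanSquare s t P f ≤ c ^ 2 * ∏ p ∈ P, (s p * a p ^ 2 + t p * b p ^ 2) := by
  rw [weightedMeanSquare, Finset.prod_add, Finset.mul_sum]
  refine Finset.sum_le_sum fun T hT => ?_
  have hT := Finset.mem_powerset.1 hT
  have hs_prod : 0 ≤ ∏ p ∈ T, s p := Finset.prod_nonneg fun p hp => hs p (hT hp)
  have ht_prod : 0 ≤ ∏ p ∈ P \ T, t p :=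
    Finset.prod_nonneg fun p hp => ht p (Finset.mem_sdiff.1 hp).1
  calc ((∏ p ∈ T, s p) * ∏ p ∈ P \ T, t p) * multipleSum P f T ^ 2
      ≤ ((∏ p ∈ T, s p) * ∏ p ∈ P \ T, t p) * (c * ((∏ p ∈ T, a p) * ∏ p ∈ P \ T, b p)) ^ 2 := by
        rw [← sq_abs (multipleSum P f T)]
        gcongr
        exact hf T hT
    _ = _ := by
        simp only [Finset.prod_mul_distrib, Finset.prod_pow]
        ring

lemma weightedMeanSquare_le_prod_of_abs_le (hs : ∀ p ∈ P, 0 ≤ s p) (ht : ∀ p ∈ P, 0 ≤ t p)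
    {c : ℝ} {x y : ℕ → ℝ}
    (hf : ∀ S ⊆ P, |f S| ≤ c * ((∏ p ∈ S, x p) * ∏ p ∈ P \ S, y p)) :
    weightedMeanSquare s t P f
      ≤ c ^ 2 * ∏ p ∈ P, (s p * (x p / p) ^ 2 + t p * (x p / p + y p) ^ 2) :=
  weightedMeanSquare_le_prod hs ht fun _ hT => abs_multipleSum_le hf hT

-- Cauchy–Schwarz over `I`, for each `d` with weights depending multiplicatively on `d`.
lemma meanSquare_sum_le {ι : Type*} (I : Finset ι) {s t : ι → ℕ → ℝ} (g : ι → Finset ℕ → ℝ)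
    (hs : ∀ i ∈ I, ∀ p ∈ P, 0 < s i p) (ht : ∀ i ∈ I, ∀ p ∈ P, 0 < t i p) {K : ℝ}
    (hK : ∀ T ⊆ P, ∑ i ∈ I, (∏ p ∈ T, p / s i p) * ∏ p ∈ P \ T, 1 / t i p ≤ K) :
    meanSquare P (fun S => ∑ i ∈ I, g i S)
      ≤ K * ∑ i ∈ I, weightedMeanSquare (s i) (t i) P (g i) := by
  simp only [meanSquare_eq_sum, multipleSum_sum, weightedMeanSquare]
  rw [Finset.sum_comm, Finset.mul_sum]
  refine Finset.sum_le_sum fun T hT => ?_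
  have hT := Finset.mem_powerset.1 hT
  have hs_prod : ∀ i ∈ I, 0 < ∏ p ∈ T, s i p := fun i hi =>
    Finset.prod_pos fun p hp => hs i hi p (hT hp)
  have ht_prod : ∀ i ∈ I, 0 < ∏ p ∈ P \ T, t i p := fun i hi =>
    Finset.prod_pos fun p hp => ht i hi p (Finset.mem_sdiff.1 hp).1
  set w : ι → ℝ := fun i => (∏ p ∈ T, s i p) * ∏ p ∈ P \ T, t i p
  set u : ι → ℝ := fun i => multipleSum P (g i) T
  have hw : ∀ i ∈ I, 0 < w i := fun i hi => mul_pos (hs_prod i hi) (ht_prod i hi)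
  have hcs : (∑ i ∈ I, u i) ^ 2 ≤ (∑ i ∈ I, 1 / w i) * ∑ i ∈ I, w i * u i ^ 2 := by
    refine Finset.sum_sq_le_sum_mul_sum_of_sq_le_mul I (fun i hi => ?_) (fun i hi => ?_)
      fun i hi => ?_
    all_goals have := hw i hi
    · positivity
    · positivity
    · field_simp
      rfl
  have hweights : (∏ p ∈ T, (p : ℝ)) * ∑ i ∈ I, 1 / w i ≤ K := by
    refine le_trans (le_of_eq ?_) (hK T hT)
    rw [Finset.mul_sum]
    refine Finset.sum_congr rfl fun i _ => ?_
    rw [Finset.prod_div_distrib, Finset.prod_div_distrib, Finset.prod_const_one, div_mul_div_comm,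
      mul_one, mul_one_div]
  calc (∏ p ∈ T, (p : ℝ)) * (∑ i ∈ I, u i) ^ 2
      ≤ (∏ p ∈ T, (p : ℝ)) * ((∑ i ∈ I, 1 / w i) * ∑ i ∈ I, w i * u i ^ 2) := by gcongr
    _ = (∏ p ∈ T, (p : ℝ)) * (∑ i ∈ I, 1 / w i) * ∑ i ∈ I, w i * u i ^ 2 := by ring
    _ ≤ K * ∑ i ∈ I, w i * u i ^ 2 := by
        gcongr
        exact Finset.sum_nonneg fun i hi => mul_nonneg (hw i hi).le (sq_nonneg _)

end MeanSquare

lemma exists_meanSquare_neg_one_pow_card_le :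
    ∃ C : ℝ, 0 < C ∧ ∀ {N : ℕ}, 2 ≤ N →
      meanSquare (Nat.primesBelow N) (fun S => (-1) ^ S.card) ≤ C / Real.log N := by
  obtain ⟨C, hC, hprod⟩ := exists_prod_inv_add_sq_le
  refine ⟨C, hC, fun {N} hN => le_trans ?_ (hprod hN)⟩
  have habs : ∀ T ⊆ Nat.primesBelow N,
      |multipleSum (Nat.primesBelow N) (fun S => (-1) ^ S.card) T|
        ≤ 1 * ((∏ p ∈ T, 1 / (p : ℝ)) * ∏ p ∈ Nat.primesBelow N \ T, (1 - 1 / (p : ℝ))) := by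
    intro T hT
    rw [multipleSum_neg_one_pow_card hT, abs_mul, Finset.abs_prod, Finset.abs_prod, one_mul]
    refine le_of_eq (congrArg₂ _ (Finset.prod_congr rfl fun p _ => ?_)
      (Finset.prod_congr rfl fun p hp => ?_))
    · simp [abs_div]
    · exact abs_of_pos
        (one_sub_one_div_prime_pos (Nat.prime_of_mem_primesBelow (Finset.mem_sdiff.1 hp).1))
  calc meanSquare (Nat.primesBelow N) (fun S => (-1) ^ S.card)
      ≤ 1 ^ 2 * ∏ p ∈ Nat.primesBelow N, (p * (1 / (p : ℝ)) ^ 2 + 1 * (1 - 1 / (p : ℝ)) ^ 2) :=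
        weightedMeanSquare_le_prod (fun p _ => p.cast_nonneg) (fun _ _ => zero_le_one) habs
    _ = ∏ p ∈ Nat.primesBelow N, (1 / (p : ℝ) + (1 - 1 / (p : ℝ)) ^ 2) := by
        rw [one_pow, one_mul]
        refine Finset.prod_congr rfl fun p hp => ?_
        have : (p : ℝ) ≠ 0 := by exact_mod_cast (Nat.prime_of_mem_primesBelow hp).ne_zero
        field_simp

lemma exists_meanSquare_le_log_div_log_pow_four :
    ∃ C : ℝ, 0 < C ∧ ∀ {M N : ℕ} {P : Finset ℕ} {f : Finset ℕ → ℝ}, 2 ≤ M → M ≤ N →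
      (∀ p ∈ P, p.Prime ∧ M ≤ p ∧ p < N) → (∀ S ⊆ P, |f S| ≤ 1) →
      meanSquare P f ≤ C * (Real.log N / Real.log M) ^ 4 := by
  obtain ⟨C, hC, hprod⟩ := exists_prod_le_log_div_log_pow
  refine ⟨C ^ 4, by positivity, fun {M N P f} hM hMN hP hf => ?_⟩
  have hfactor : ∀ p ∈ P, 0 ≤ p * (1 / (p : ℝ)) ^ 2 + 1 * (1 / (p : ℝ) + 1) ^ 2 ∧
      p * (1 / (p : ℝ)) ^ 2 + 1 * (1 / (p : ℝ) + 1) ^ 2 ≤ 1 + (4 : ℕ) / (p : ℝ) := by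
    intro p hp
    have hp₀ : (p : ℝ) ≠ 0 := by exact_mod_cast (hP p hp).1.ne_zero
    have hhalf := one_div_prime_le_half (hP p hp).1
    have hinv : (0 : ℝ) ≤ 1 / p := by positivity
    have hsq : (p : ℝ) * (1 / p) ^ 2 = 1 / p := by field_simp
    refine ⟨by positivity, ?_⟩
    rw [hsq, div_eq_mul_one_div ((4 : ℕ) : ℝ)]
    push_cast
    nlinarith
  calc meanSquare P f
      ≤ 1 ^ 2 * ∏ p ∈ P, (p * (1 / (p : ℝ)) ^ 2 + 1 * (1 / (p : ℝ) + 1) ^ 2) :=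
        weightedMeanSquare_le_prod_of_abs_le (x := 1) (y := 1) (fun p _ => p.cast_nonneg)
          (fun _ _ => zero_le_one) fun S hS => by simpa using hf S hS
    _ ≤ (C * (Real.log N / Real.log M)) ^ 4 := by
        rw [one_pow, one_mul]
        exact hprod 4 hM hMN hP hfactor
    _ = C ^ 4 * (Real.log N / Real.log M) ^ 4 := mul_pow _ _ _

/-! ### Truncation conditions of combinatorial sieves -/

/-- The parity selector of the truncation condition: odd if `odd`, even otherwise. -/
def HasParity (odd : Bool) (n : ℕ) : Prop :=
  if odd then Odd n else Even n

/-- The truncation condition of the `β`-sieve of level `E` for `d = p₁⋯p_r`, encoded by the set of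
its prime factors: for `q = p_m`, the filtered set is `{p₁, …, p_m}`. -/
def SieveAdmissible (E : ℝ) (β : ℕ) (odd : Bool) (S : Finset ℕ) : Prop :=
  ∀ q ∈ S, HasParity odd (S.filter (q ≤ ·)).card →
    (∏ p ∈ S.filter (q ≤ ·), (p : ℝ)) * (q : ℝ) ^ β < E

/-- The `β`-sieve weight of level `E` with no restriction on the size of the primes, as a function
of the set of prime factors. -/
noncomputable def truncatedSign (E : ℝ) (β : ℕ) (odd : Bool) (S : Finset ℕ) : ℝ :=
  if SieveAdmissible E β odd S then (-1) ^ S.card else 0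

lemma hasParity_succ {odd : Bool} {n : ℕ} : HasParity odd (n + 1) ↔ ¬HasParity odd n := by
  cases odd <;> simp [HasParity, Nat.even_add_one, Nat.odd_add_one]

lemma abs_truncatedSign_le_one (E : ℝ) (β : ℕ) (odd : Bool) (S : Finset ℕ) :
    |truncatedSign E β odd S| ≤ 1 := by
  unfold truncatedSign
  split_ifs <;> simp

section SieveWeight

variable {E : ℝ} {β : ℕ} {odd : Bool}

lemma filter_getElem_le_toFinset {l : List ℕ} (hl : l.Pairwise (· > ·)) {i : ℕ}
    (hi : i < l.length) : l.toFinset.filter (l[i] ≤ ·) = (l.take (i + 1)).toFinset := by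
  rw [List.pairwise_iff_getElem] at hl
  ext x
  simp only [Finset.mem_filter, List.mem_toFinset, List.mem_take_iff_getElem]
  constructor
  · rintro ⟨hx, hle⟩
    obtain ⟨j, hj, rfl⟩ := List.getElem_of_mem hx
    refine ⟨j, lt_min (not_le.1 fun h => ?_) hj, rfl⟩
    exact (hl i j hi hj (by lia)).not_ge hle
  · rintro ⟨j, hj, rfl⟩
    refine ⟨List.getElem_mem _, ?_⟩
    rcases (Nat.lt_succ_iff.1 (hj.trans_le (min_le_left _ _))).eq_or_lt with rfl | h
    · exact le_rfl
    · exact (hl j i (by lia) hi h).le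

lemma sieveAdmissible_toFinset_iff {l : List ℕ} (hl : l.Pairwise (· > ·)) :
    SieveAdmissible E β odd l.toFinset ↔ ∀ m : ℕ, 1 ≤ m → m ≤ l.length → HasParity odd m →
      ((l.take m).prod : ℝ) * (l.getD (m - 1) 1 : ℕ) ^ β < E := by
  have htake : ∀ i (hi : i < l.length), (l.toFinset.filter (l[i] ≤ ·)).card = i + 1 ∧
      ∏ p ∈ l.toFinset.filter (l[i] ≤ ·), (p : ℝ) = (l.take (i + 1)).prod := fun i hi => by
    have hnodup : (l.take (i + 1)).Nodup :=
      (hl.imp fun h => h.ne').sublist (List.take_sublist _ _)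
    rw [filter_getElem_le_toFinset hl hi, List.toFinset_card_of_nodup hnodup, List.length_take,
      List.prod_toFinset _ hnodup, Nat.cast_list_prod]
    exact ⟨min_eq_left hi, rfl⟩
  constructor
  · intro h m hm hml hpar
    obtain ⟨i, rfl⟩ := Nat.exists_eq_add_of_le' hm
    obtain ⟨hcard, hprod⟩ := htake i hml
    have := h l[i] (List.mem_toFinset.2 (List.getElem_mem _)) (by rwa [hcard])
    rwa [hprod, ← List.getD_eq_getElem l 1] at this
  · intro h q hq hpar
    obtain ⟨i, hi, rfl⟩ := List.getElem_of_mem (List.mem_toFinset.1 hq)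
    obtain ⟨hcard, hprod⟩ := htake i hi
    rw [hcard] at hpar
    rw [hprod, ← List.getD_eq_getElem l 1]
    exact h (i + 1) (by lia) hi hpar

lemma squarefree_prod_primes {S : Finset ℕ} (hS : ∀ p ∈ S, p.Prime) :
    Squarefree (∏ p ∈ S, p) :=
  Finset.squarefree_prod_of_pairwise_isCoprime
    (fun p hp q hq hpq => Nat.coprime_iff_isRelPrime.1
      ((Nat.coprime_primes (hS p hp) (hS q hq)).2 hpq))
    fun p hp => (hS p hp).prime.squarefree

lemma sieveWeight_prod {lo hi : ℝ} {S : Finset ℕ} (hS : ∀ p ∈ S, p.Prime)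
    (hlohi : ∀ p ∈ S, lo ≤ (p : ℝ) ∧ (p : ℝ) < hi) :
    sieveWeight lo hi E β odd (∏ p ∈ S, p) = truncatedSign E β odd S := by
  have hsq := squarefree_prod_primes hS
  have hfactors : (∏ p ∈ S, p).primeFactors = S := Nat.primeFactors_prod hS
  set d := ∏ p ∈ S, p
  have hnodup : d.primeFactorsList.Nodup :=
    (Nat.squarefree_iff_nodup_primeFactorsList hsq.ne_zero).1 hsq
  have hlength : d.primeFactorsList.length = S.card := by
    rw [← List.toFinset_card_of_nodup hnodup]
    exact congrArg _ hfactors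
  have hdesc : d.primeFactorsList.reverse.Pairwise (· > ·) :=
    List.pairwise_reverse.2 (((Nat.primeFactorsList_sorted d).pairwise.and hnodup).imp
      fun h => lt_of_le_of_ne h.1 h.2)
  have hset : d.primeFactorsList.reverse.toFinset = S := by
    rw [List.toFinset_reverse]
    exact hfactors
  have hmoebius : (ArithmeticFunction.moebius d : ℝ) = (-1) ^ S.card := by
    rw [ArithmeticFunction.moebius_apply_of_squarefree hsq, ArithmeticFunction.cardFactors_apply,
      hlength]
    simp
  have hadm := sieveAdmissible_toFinset_iff (E := E) (β := β) (odd := odd) hdesc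
  rw [hset, List.length_reverse] at hadm
  rw [sieveWeight, truncatedSign, hmoebius, hfactors]
  exact if_congr ⟨fun h => hadm.2 h.2.2, fun h => ⟨hsq, hlohi, hadm.1 h⟩⟩ rfl rfl

end SieveWeight

namespace SieveAdmissible

variable {E : ℝ} {β k q : ℕ} {odd : Bool} {S : Finset ℕ}

lemma filter_lt (h : SieveAdmissible E β odd S) (q : ℕ) :
    SieveAdmissible E β odd (S.filter (q < ·)) := by
  intro p hp
  rw [Finset.mem_filter] at hp
  rw [filter_filter_of_imp fun x hx => hp.2.trans_le hx]
  exact h p hp.1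

lemma prod_mul_pow_lt (h : SieveAdmissible E β odd S) (hpar : HasParity odd S.card) (hq : q ∈ S)
    (hmin : ∀ p ∈ S, q ≤ p) : (∏ p ∈ S, (p : ℝ)) * (q : ℝ) ^ β < E := by
  have h := h q hq
  rw [Finset.filter_true_of_mem hmin] at h
  exact h hpar

-- One of the two smallest elements of `S` sits at a position of the constrained parity.
lemma pow_mul_prod_le (h : SieveAdmissible E (k + 1) odd S) (hq : 1 ≤ q) (hmin : ∀ p ∈ S, q ≤ p)
    (hqE : (q : ℝ) ^ k ≤ E) (hqpE : ∀ p ∈ S, (q : ℝ) ^ k * p ≤ E) :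
    (q : ℝ) ^ k * ∏ p ∈ S, (p : ℝ) ≤ E := by
  have hmul : ∀ {T : Finset ℕ} {a x : ℕ}, q ≤ a → x ≤ a →
      (∏ p ∈ T, (p : ℝ)) * (a : ℝ) ^ (k + 1) < E →
      (q : ℝ) ^ k * (x * ∏ p ∈ T, (p : ℝ)) ≤ E := fun {T a x} hqa hxa hE => by
    refine le_trans ?_ hE.le
    have : (0 : ℝ) ≤ ∏ p ∈ T, (p : ℝ) := Finset.prod_nonneg fun p _ => p.cast_nonneg
    calc (q : ℝ) ^ k * (x * ∏ p ∈ T, (p : ℝ)) ≤ (a : ℝ) ^ k * (a * ∏ p ∈ T, (p : ℝ)) := by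
          gcongr
      _ = (∏ p ∈ T, (p : ℝ)) * (a : ℝ) ^ (k + 1) := by ring
  rcases S.eq_empty_or_nonempty with rfl | hS
  · simpa using hqE
  set a := S.min' hS
  have ha : a ∈ S := S.min'_mem hS
  by_cases hpar : HasParity odd S.card
  · simpa using hmul (x := 1) (hmin a ha) (hq.trans (hmin a ha))
      (h.prod_mul_pow_lt hpar ha fun p => S.min'_le p)
  have h' := h.filter_lt a
  rw [filter_min'_lt hS] at h'
  rw [← Finset.card_erase_add_one ha, hasParity_succ, not_not] at hpar
  rw [← Finset.mul_prod_erase S _ ha]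
  rcases (S.erase a).eq_empty_or_nonempty with hempty | hS'
  · simpa [hempty] using hqpE a ha
  · have hb := (S.erase a).min'_mem hS'
    exact hmul (hmin _ (Finset.mem_of_mem_erase hb)) (S.min'_le _ (Finset.mem_of_mem_erase hb))
      (h'.prod_mul_pow_lt hpar hb fun p => (S.erase a).min'_le p)

lemma prod_le (h : SieveAdmissible E (k + 1) odd S) (hE : 1 ≤ E) (hSE : ∀ p ∈ S, (p : ℝ) ≤ E)
    (hS : ∀ p ∈ S, 1 ≤ p) : ∏ p ∈ S, (p : ℝ) ≤ E := by
  simpa using h.pow_mul_prod_le le_rfl hS (by simpa using hE) (by simpa using hSE)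

lemma mul_log_add_sum_log_le (h : SieveAdmissible E (k + 1) odd S) (hq : 1 ≤ q)
    (hmin : ∀ p ∈ S, q ≤ p) (hqE : (q : ℝ) ^ (k + 1) ≤ E)
    (hSE : ∀ p ∈ S, (p : ℝ) ^ (k + 1) ≤ E) :
    k * Real.log q + ∑ p ∈ S, Real.log p ≤ Real.log E := by
  have hq' : (1 : ℝ) ≤ q := by exact_mod_cast hq
  have hpos : ∀ p ∈ S, (p : ℝ) ≠ 0 := fun p hp => by
    have := hq.trans (hmin p hp)
    positivity
  rw [← Real.log_pow, ← Real.log_prod hpos, ← Real.log_mul (by positivity)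
    (Finset.prod_ne_zero_iff.2 hpos)]
  refine Real.log_le_log (mul_pos (by positivity) ?_) ?_
  · exact Finset.prod_pos fun p hp => (hpos p hp).symm.lt_of_le p.cast_nonneg
  · refine h.pow_mul_prod_le hq hmin ((pow_le_pow_right₀ hq' k.le_succ).trans hqE) fun p hp => ?_
    calc (q : ℝ) ^ k * p ≤ (p : ℝ) ^ k * p := by gcongr; exact hmin p hp
      _ ≤ E := hSE p hp

-- Each prime uses up at most the proportion `1/k` of the level left over by the larger primes.
lemma pow_card_mul_log_le (hk : 1 ≤ k) (hS : ∀ p ∈ S, 1 ≤ p ∧ (p : ℝ) ^ (k + 1) ≤ E)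
    (h : ∀ q ∈ S, SieveAdmissible E (k + 1) odd (S.filter (q < ·))) :
    (1 - 1 / (k : ℝ)) ^ S.card * Real.log E ≤ Real.log E - ∑ p ∈ S, Real.log p := by
  induction S using Finset.induction_on_min with
  | empty => simp
  | insert a S ha ih =>
    have haS : a ∉ S := fun h => lt_irrefl a (ha a h)
    have hk' : (1 : ℝ) ≤ k := by exact_mod_cast hk
    obtain ⟨ha₁, haE⟩ := hS a (Finset.mem_insert_self a S)
    have hadm : SieveAdmissible E (k + 1) odd S := by
      have h := h a (Finset.mem_insert_self a S)
      rwa [Finset.filter_insert, if_neg (lt_irrefl a), Finset.filter_true_of_mem ha] at h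
    have ih := ih (fun p hp => hS p (Finset.mem_insert_of_mem hp)) fun q hq => by
      have h := h q (Finset.mem_insert_of_mem hq)
      rwa [Finset.filter_insert, if_neg (ha q hq).not_gt] at h
    have hlog : k * Real.log a + ∑ p ∈ S, Real.log p ≤ Real.log E :=
      hadm.mul_log_add_sum_log_le ha₁ (fun p hp => (ha p hp).le) haE fun p hp =>
        (hS p (Finset.mem_insert_of_mem hp)).2
    have hratio : 0 ≤ 1 - 1 / (k : ℝ) := sub_nonneg.2 (by rwa [div_le_one (by linarith)])
    calc (1 - 1 / (k : ℝ)) ^ (insert a S).card * Real.log E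
        = (1 - 1 / (k : ℝ)) * ((1 - 1 / (k : ℝ)) ^ S.card * Real.log E) := by
          rw [Finset.card_insert_of_notMem haS]
          ring
      _ ≤ (1 - 1 / (k : ℝ)) * (Real.log E - ∑ p ∈ S, Real.log p) := by gcongr
      _ = Real.log E - ∑ p ∈ S, Real.log p
          - 1 / (k : ℝ) * (Real.log E - ∑ p ∈ S, Real.log p) := by ring
      _ ≤ Real.log E - ∑ p ∈ S, Real.log p - 1 / (k : ℝ) * (k * Real.log a) := by
          gcongr
          linarith
      _ = Real.log E - ∑ p ∈ insert a S, Real.log p := by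
          rw [Finset.sum_insert haS]
          field_simp
          ring

lemma le_prod_mul_pow_of_not (h : SieveAdmissible E β odd (S.filter (q < ·)))
    (hS : ¬SieveAdmissible E β odd S) (hmin : ∀ p ∈ S, q ≤ p) :
    E ≤ (∏ p ∈ S, (p : ℝ)) * (q : ℝ) ^ β := by
  simp only [SieveAdmissible, not_forall, not_lt] at hS
  obtain ⟨r, hr, hpar, hle⟩ := hS
  rcases (hmin r hr).eq_or_lt with rfl | hqr
  · rwa [Finset.filter_true_of_mem hmin] at hle
  · have hlt := h r (Finset.mem_filter.2 ⟨hr, hqr⟩)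
    rw [filter_filter_of_imp fun x hx => hqr.trans_le hx] at hlt
    exact absurd (hlt hpar) hle.not_gt

lemma pow_card_mul_log_le_of_not (h : SieveAdmissible E (k + 1) odd (S.filter (q < ·)))
    (hS : ¬SieveAdmissible E (k + 1) odd S) (hk : 1 ≤ k) (hq : 1 ≤ q) {N : ℕ}
    (hqN : ∀ p ∈ S, q ≤ p ∧ p ≤ N) (hN : 1 ≤ N) (hNE : (N : ℝ) ^ (k + 1) ≤ E) :
    (1 - 1 / (k : ℝ)) ^ S.card * Real.log N ≤ Real.log q := by
  have hE : 0 < E := lt_of_lt_of_le (by positivity) hNE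
  have hk' : (1 : ℝ) ≤ k := by exact_mod_cast hk
  have hratio : 0 ≤ 1 - 1 / (k : ℝ) := sub_nonneg.2 (by rwa [div_le_one (by linarith)])
  have hpos : ∀ p ∈ S, (p : ℝ) ≠ 0 := fun p hp => by
    have := hq.trans (hqN p hp).1
    positivity
  have hupper : Real.log E - ∑ p ∈ S, Real.log p ≤ (k + 1) * Real.log q := by
    have hle := Real.log_le_log hE (h.le_prod_mul_pow_of_not hS fun p hp => (hqN p hp).1)
    rw [Real.log_mul (Finset.prod_ne_zero_iff.2 hpos) (by positivity), Real.log_prod hpos,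
      Real.log_pow] at hle
    push_cast at hle
    linarith
  have hlower : (1 - 1 / (k : ℝ)) ^ S.card * Real.log E ≤ Real.log E - ∑ p ∈ S, Real.log p := by
    refine pow_card_mul_log_le (odd := odd) hk
      (fun p hp => ⟨hq.trans (hqN p hp).1, le_trans ?_ hNE⟩) fun p hp => ?_
    · gcongr
      exact (hqN p hp).2
    · rw [← filter_filter_of_imp fun x hx => (hqN p hp).1.trans_lt hx]
      exact h.filter_lt p
  have hlogE : (k + 1) * Real.log N ≤ Real.log E := by
    have hle := Real.log_le_log (by positivity) hNE
    rw [Real.log_pow] at hle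
    exact_mod_cast hle
  refine le_of_mul_le_mul_left ?_ (show (0 : ℝ) < k + 1 by positivity)
  calc (k + 1) * ((1 - 1 / (k : ℝ)) ^ S.card * Real.log N)
      = (1 - 1 / (k : ℝ)) ^ S.card * ((k + 1) * Real.log N) := by ring
    _ ≤ (1 - 1 / (k : ℝ)) ^ S.card * Real.log E := by gcongr
    _ ≤ (k + 1) * Real.log q := hlower.trans hupper

end SieveAdmissible

/-! ### The mean square of the truncated sieve weights -/

/-- The contribution to a truncated sieve weight of the numbers `d = p₁⋯p_r` whose truncation
condition first fails at the prime `q = p_m`, as a function of `B = {p₁, …, p_m}`. It vanishes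
unless `q ∈ B`, as otherwise `B.filter (q < ·) = B` when `q` bounds `B` from below. -/
noncomputable def boundarySign (E : ℝ) (β : ℕ) (odd : Bool) (q : ℕ) (B : Finset ℕ) : ℝ :=
  if SieveAdmissible E β odd (B.filter (q < ·)) ∧ ¬SieveAdmissible E β odd B
  then (-1) ^ (B.card + 1) else 0

/-- The Cauchy–Schwarz weight at a prime `p ∣ d` for the numbers whose truncation condition first
fails at `q`. Doubling for `q ≤ p` makes the products `∏ p / weight` over `p ∣ d` sum geometrically
over the primes `q ∣ d`. -/
noncomputable def boundaryWeight (q p : ℕ) : ℝ :=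
  if p < q then p else 2 * p

/-- The Cauchy–Schwarz weight at a prime `p ∤ d` for the numbers whose truncation condition first
fails at `q`, among the numbers with all prime factors below `N`. The reciprocal
`log q / (q log N)` at `q` has bounded sum over `q < N`, by Mertens' bound for `∑ log q / q`. -/
noncomputable def boundaryCoweight (N q p : ℕ) : ℝ :=
  if p = q then q * (Real.log N / Real.log q) else 1

section Boundary

variable {E : ℝ} {β k N q : ℕ} {odd : Bool} {B S T : Finset ℕ}

lemma boundarySign_eq_zero (hB : ∀ p ∈ B, q ≤ p) (hq : q ∉ B) : boundarySign E β odd q B = 0 := by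
  have hfilter : B.filter (q < ·) = B :=
    Finset.filter_true_of_mem fun p hp => (hB p hp).lt_of_ne fun h => hq (h ▸ hp)
  rw [boundarySign, hfilter, if_neg (and_not_self)]

lemma truncatedSign_eq_add_sum_boundarySign (E : ℝ) (β : ℕ) (odd : Bool) (S : Finset ℕ) :
    truncatedSign E β odd S = (-1) ^ S.card +
      ∑ q ∈ S, boundarySign E β odd q (S.filter (q ≤ ·)) * (-1) ^ (S.filter (· < q)).card := by
  have hterm : ∀ q, boundarySign E β odd q (S.filter (q ≤ ·)) * (-1) ^ (S.filter (· < q)).card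
      = (-1) ^ S.card * ((if SieveAdmissible E β odd (S.filter (q ≤ ·)) then 1 else 0) -
          if SieveAdmissible E β odd (S.filter (q < ·)) then 1 else 0) := fun q => by
    have hcard : S.card = (S.filter (q ≤ ·)).card + (S.filter (· < q)).card := by
      simpa only [not_le] using (Finset.card_filter_add_card_filter_not (s := S) (q ≤ ·)).symm
    have hhered := fun h : SieveAdmissible E β odd (S.filter (q ≤ ·)) => h.filter_lt q
    rw [filter_filter_of_imp fun x hx => le_of_lt hx] at hhered
    rw [boundarySign, filter_filter_of_imp fun x hx => le_of_lt hx, hcard, pow_add]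
    split_ifs <;> first | tauto | ring
  have hempty : SieveAdmissible E β odd ∅ := fun q hq => absurd hq (Finset.notMem_empty q)
  rw [Finset.sum_congr rfl fun q _ => hterm q, ← Finset.mul_sum, sum_filter_le_sub_filter_lt
    fun S => if SieveAdmissible E β odd S then (1 : ℝ) else 0, if_pos hempty, truncatedSign]
  split_ifs <;> ring

lemma mem_primesBelow_sdiff {M N p : ℕ} :
    p ∈ Nat.primesBelow N \ Nat.primesBelow M ↔ p.Prime ∧ M ≤ p ∧ p < N := by
  simp only [Finset.mem_sdiff, Nat.mem_primesBelow]
  grind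

lemma truncatedSign_eq_sum_primesBelow (hS : S ⊆ Nat.primesBelow N) :
    truncatedSign E β odd S = (-1) ^ S.card + ∑ q ∈ Nat.primesBelow N,
      boundarySign E β odd q (S \ Nat.primesBelow q) * (-1) ^ (S ∩ Nat.primesBelow q).card := by
  have hprime : ∀ p ∈ S, p.Prime := fun p hp => Nat.prime_of_mem_primesBelow (hS hp)
  have hsdiff : ∀ q, S \ Nat.primesBelow q = S.filter (q ≤ ·) := fun q => by
    ext p
    simp only [Finset.mem_sdiff, Finset.mem_filter, Nat.mem_primesBelow, not_and, ← not_lt]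
    exact and_congr_right fun hp => ⟨fun h hlt => h hlt (hprime p hp), fun h hlt => absurd hlt h⟩
  have hinter : ∀ q, S ∩ Nat.primesBelow q = S.filter (· < q) := fun q => by
    ext p
    simp only [Finset.mem_inter, Finset.mem_filter, Nat.mem_primesBelow]
    exact and_congr_right fun hp => and_iff_left (hprime p hp)
  simp only [hsdiff, hinter]
  rw [truncatedSign_eq_add_sum_boundarySign]
  congr 1
  refine Finset.sum_subset hS fun q _ hq => ?_
  rw [boundarySign_eq_zero (fun p hp => (Finset.mem_filter.1 hp).2)
    fun h => hq (Finset.mem_filter.1 h).1, zero_mul]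

-- A set failing its condition at `q` has so many elements that, for large `k`, `2 ^ card` exceeds
-- the required power of `log N / log q`.
lemma abs_boundarySign_le (hk : 14 ≤ k) (hN : 2 ≤ N) (hNE : (N : ℝ) ^ (k + 1) ≤ E) (hq : 1 ≤ q)
    (hB : ∀ p ∈ B, q ≤ p ∧ p ≤ N) :
    |boundarySign E (k + 1) odd q B| ≤ (Real.log q / Real.log N) ^ 9 * 2 ^ B.card := by
  have hlogN : 0 < Real.log N := Real.log_pos (by exact_mod_cast hN)
  rw [boundarySign]
  split_ifs with h
  · have hk' : 1 / (k : ℝ) ≤ 1 / 14 :=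
      one_div_le_one_div_of_le (by norm_num) (by exact_mod_cast hk)
    have hratio : 1 / 2 ≤ (1 - 1 / (k : ℝ)) ^ 9 := by
      calc (1 / 2 : ℝ) ≤ (13 / 14) ^ 9 := by norm_num
        _ ≤ (1 - 1 / (k : ℝ)) ^ 9 := by gcongr; linarith
    have hle : (1 - 1 / (k : ℝ)) ^ B.card ≤ Real.log q / Real.log N :=
      (le_div_iff₀ hlogN).2 (h.1.pow_card_mul_log_le_of_not h.2 (by lia) hq hB (by lia) hNE)
    calc |(-1 : ℝ) ^ (B.card + 1)| = (1 / 2) ^ B.card * 2 ^ B.card := by simp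
      _ ≤ ((1 - 1 / (k : ℝ)) ^ 9) ^ B.card * 2 ^ B.card := by gcongr
      _ = ((1 - 1 / (k : ℝ)) ^ B.card) ^ 9 * 2 ^ B.card := by rw [pow_right_comm]
      _ ≤ _ := by
        gcongr
        exact pow_nonneg (by linarith) _
  · simp only [abs_zero]
    positivity

lemma sum_one_half_pow_card_filter_le (T : Finset ℕ) :
    ∑ q ∈ T, (1 / 2 : ℝ) ^ (T.filter (q ≤ ·)).card ≤ 1 := by
  have hterm : ∀ q ∈ T, (1 / 2 : ℝ) ^ (T.filter (q ≤ ·)).card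
      = -(1 / 2) ^ (T.filter (q ≤ ·)).card - -(1 / 2) ^ (T.filter (q < ·)).card := fun q hq => by
    have hinsert : T.filter (q ≤ ·) = insert q (T.filter (q < ·)) := by
      ext p
      simp only [Finset.mem_filter, Finset.mem_insert, le_iff_eq_or_lt]
      grind
    rw [hinsert, Finset.card_insert_of_notMem (by simp)]
    ring
  rw [Finset.sum_congr rfl hterm, sum_filter_le_sub_filter_lt fun S => -(1 / 2 : ℝ) ^ S.card]
  simp

lemma prod_div_boundaryWeight (hT : ∀ p ∈ T, p ≠ 0) (q : ℕ) :
    ∏ p ∈ T, p / boundaryWeight q p = (1 / 2) ^ (T.filter (q ≤ ·)).card := by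
  rw [← Finset.prod_const, Finset.prod_filter]
  refine Finset.prod_congr rfl fun p hp => ?_
  have : (p : ℝ) ≠ 0 := by exact_mod_cast hT p hp
  rcases lt_or_ge p q with hpq | hqp
  · rw [boundaryWeight, if_pos hpq, if_neg hpq.not_ge, div_self this]
  · rw [boundaryWeight, if_neg hqp.not_gt, if_pos hqp]
    field_simp

lemma prod_one_div_boundaryCoweight (S : Finset ℕ) :
    ∏ p ∈ S, 1 / boundaryCoweight N q p
      = if q ∈ S then Real.log q / q / Real.log N else 1 := by
  have hterm : ∀ p, 1 / boundaryCoweight N q p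
      = if p = q then Real.log q / q / Real.log N else 1 := fun p => by
    rw [boundaryCoweight]
    split_ifs
    · field_simp
    · exact div_one 1
  rw [Finset.prod_congr rfl fun p _ => hterm p, Finset.prod_ite_eq']

lemma sum_prod_boundaryWeight_le (hN : 2 ≤ N) (hT : T ⊆ Nat.primesBelow N) :
    ∑ q ∈ Nat.primesBelow N, (∏ p ∈ T, p / boundaryWeight q p) *
      ∏ p ∈ Nat.primesBelow N \ T, 1 / boundaryCoweight N q p ≤ 4 := by
  have hlogN : 0 < Real.log N := Real.log_pos (by exact_mod_cast hN)
  have hterm : ∀ q ∈ Nat.primesBelow N, (∏ p ∈ T, p / boundaryWeight q p) *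
      ∏ p ∈ Nat.primesBelow N \ T, 1 / boundaryCoweight N q p
        ≤ (if q ∈ T then (1 / 2) ^ (T.filter (q ≤ ·)).card else 0)
          + Real.log q / q / Real.log N := fun q hq => by
    have hlog : 0 ≤ Real.log q / q / Real.log N := by positivity
    rw [prod_div_boundaryWeight fun p hp => (Nat.prime_of_mem_primesBelow (hT hp)).ne_zero,
      prod_one_div_boundaryCoweight]
    by_cases hqT : q ∈ T
    · simpa [hqT] using hlog
    · rw [if_pos (Finset.mem_sdiff.2 ⟨hq, hqT⟩), if_neg hqT, zero_add]
      exact mul_le_of_le_one_left hlog (pow_le_one₀ (by norm_num) (by norm_num))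
  calc _ ≤ ∑ q ∈ T, (1 / 2 : ℝ) ^ (T.filter (q ≤ ·)).card
        + (∑ q ∈ Nat.primesBelow N, Real.log q / q) / Real.log N := by
        refine (Finset.sum_le_sum hterm).trans_eq ?_
        rw [Finset.sum_add_distrib, Finset.sum_ite_mem, Finset.inter_eq_right.2 hT, Finset.sum_div]
    _ ≤ 1 + 3 := add_le_add (sum_one_half_pow_card_filter_le T)
        ((div_le_iff₀ hlogN).2 (sum_log_div_le_three_mul_log hN))
    _ = 4 := by norm_num

lemma boundaryWeight_pos {p : ℕ} (hp : p.Prime) (q : ℕ) : 0 < boundaryWeight q p := by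
  have := hp.pos
  rw [boundaryWeight]
  split_ifs <;> positivity

lemma boundaryCoweight_pos (hq : q.Prime) (hqN : q < N) (p : ℕ) : 0 < boundaryCoweight N q p := by
  have hlogq : 0 < Real.log q := Real.log_pos (by exact_mod_cast hq.one_lt)
  have hlogN : 0 < Real.log N := Real.log_pos (by exact_mod_cast hq.one_lt.trans hqN)
  have := hq.pos
  rw [boundaryCoweight]
  split_ifs <;> positivity

lemma abs_boundarySign_le_prod (hk : 14 ≤ k) (hNE : (N : ℝ) ^ (k + 1) ≤ E) {H : Finset ℕ}
    (hH : ∀ p ∈ H, q ≤ p ∧ p < N) (hq : 1 ≤ q) (hqH : q ∈ H) (hB : B ⊆ H) :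
    |boundarySign E (k + 1) odd q B| ≤ (Real.log q / Real.log N) ^ 9 *
      ((∏ _p ∈ B, 2) * ∏ p ∈ H \ B, if p = q then 0 else 1) := by
  rw [Finset.prod_const, Finset.prod_ite_eq']
  split_ifs with hqB
  · rw [boundarySign_eq_zero (fun p hp => (hH p (hB hp)).1) (Finset.mem_sdiff.1 hqB).2]
    simp
  · rw [mul_one]
    exact abs_boundarySign_le hk (hq.trans_lt (hH q hqH).2) hNE hq fun p hp =>
      ⟨(hH p (hB hp)).1, (hH p (hB hp)).2.le⟩

lemma weightedMeanSquare_boundarySign_le_prod (hk : 14 ≤ k) (hNE : (N : ℝ) ^ (k + 1) ≤ E)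
    {H : Finset ℕ} (hH : ∀ p ∈ H, p.Prime ∧ q ≤ p ∧ p < N) (hq : q ∈ H) :
    weightedMeanSquare (boundaryWeight q) (boundaryCoweight N q) H (boundarySign E (k + 1) odd q)
      ≤ (Real.log q / Real.log N) ^ 18 * (12 * (Real.log N / Real.log q) / q *
        ∏ p ∈ H.erase q, (8 / (p : ℝ) + (2 / p + 1) ^ 2)) := by
  obtain ⟨hq_prime, -, hqN⟩ := hH q hq
  have hq₂ : (2 : ℝ) ≤ q := by exact_mod_cast hq_prime.two_le
  have hratio : 1 ≤ Real.log N / Real.log q := (one_le_div (Real.log_pos (by linarith))).2 <|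
    Real.log_le_log (by linarith) (by exact_mod_cast hqN.le)
  have hweight : ∀ p ∈ H, boundaryWeight q p = 2 * p := fun p hp => if_neg (hH p hp).2.1.not_gt
  have hfactor : ∀ p ∈ H.erase q, boundaryWeight q p * (2 / p) ^ 2
      + boundaryCoweight N q p * (2 / p + if p = q then 0 else 1) ^ 2
        = 8 / (p : ℝ) + (2 / (p : ℝ) + 1) ^ 2 := fun p hp => by
    obtain ⟨hpq, hp⟩ := Finset.mem_erase.1 hp
    have : (p : ℝ) ≠ 0 := by exact_mod_cast (hH p hp).1.ne_zero
    rw [hweight p hp, boundaryCoweight, if_neg hpq, if_neg hpq]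
    field_simp
    ring
  have hfactor_q : boundaryWeight q q * (2 / q) ^ 2
      + boundaryCoweight N q q * (2 / q + if q = q then 0 else 1) ^ 2
        ≤ 12 * (Real.log N / Real.log q) / q := by
    rw [hweight q hq, boundaryCoweight, if_pos rfl, if_pos rfl]
    calc 2 * (q : ℝ) * (2 / q) ^ 2 + q * (Real.log N / Real.log q) * (2 / q + 0) ^ 2
        = (8 + 4 * (Real.log N / Real.log q)) / q := by
          field_simp
          ring
      _ ≤ 12 * (Real.log N / Real.log q) / q := by
          gcongr
          linarith
  refine (weightedMeanSquare_le_prod_of_abs_le (fun p hp => (boundaryWeight_pos (hH p hp).1 q).le)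
    (fun p _ => (boundaryCoweight_pos hq_prime hqN p).le) fun B hB =>
      abs_boundarySign_le_prod hk hNE (fun p hp => (hH p hp).2) hq_prime.one_le hq hB).trans ?_
  rw [← pow_mul, ← Finset.mul_prod_erase H _ hq, Finset.prod_congr rfl hfactor]
  gcongr

lemma exists_weightedMeanSquare_boundarySign_le (hk : 14 ≤ k) :
    ∃ C : ℝ, 0 < C ∧ ∀ {N q : ℕ} {E : ℝ} {odd : Bool} {H : Finset ℕ}, (N : ℝ) ^ (k + 1) ≤ E →
      (∀ p ∈ H, p.Prime ∧ q ≤ p ∧ p < N) → q ∈ H →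
      weightedMeanSquare (boundaryWeight q) (boundaryCoweight N q) H (boundarySign E (k + 1) odd q)
        ≤ C * (Real.log q / Real.log N) ^ 3 / q := by
  obtain ⟨C, hC, hprod⟩ := exists_prod_le_log_div_log_pow
  refine ⟨12 * C ^ 14, by positivity, fun {N q E odd H} hNE hH hq => ?_⟩
  obtain ⟨hq_prime, -, hqN⟩ := hH q hq
  have hlogq : 0 < Real.log q := Real.log_pos (by exact_mod_cast hq_prime.one_lt)
  have hlogN : 0 < Real.log N := Real.log_pos (by exact_mod_cast hq_prime.one_lt.trans hqN)
  have hfactor : ∀ p ∈ H.erase q, 0 ≤ 8 / (p : ℝ) + (2 / (p : ℝ) + 1) ^ 2 ∧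
      8 / (p : ℝ) + (2 / (p : ℝ) + 1) ^ 2 ≤ 1 + (14 : ℕ) / (p : ℝ) := fun p hp => by
    have hhalf := one_div_prime_le_half (hH p (Finset.mem_of_mem_erase hp)).1
    have hinv : (0 : ℝ) ≤ 1 / p := by positivity
    refine ⟨by positivity, ?_⟩
    rw [div_eq_mul_one_div 8, div_eq_mul_one_div 2, div_eq_mul_one_div ((14 : ℕ) : ℝ)]
    push_cast
    nlinarith
  calc _ ≤ (Real.log q / Real.log N) ^ 18 * (12 * (Real.log N / Real.log q) / q *
        (C * (Real.log N / Real.log q)) ^ 14) := by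
        refine (weightedMeanSquare_boundarySign_le_prod hk hNE hH hq).trans ?_
        gcongr
        exact hprod 14 hq_prime.two_le hqN.le (fun p hp => hH p (Finset.mem_of_mem_erase hp))
          hfactor
    _ = 12 * C ^ 14 * (Real.log q / Real.log N) ^ 3 / q
        * (Real.log q / Real.log N * (Real.log N / Real.log q)) ^ 15 := by ring
    _ = 12 * C ^ 14 * (Real.log q / Real.log N) ^ 3 / q := by
        rw [div_mul_div_cancel₀ hlogN.ne', div_self hlogq.ne', one_pow, mul_one]

lemma weightedMeanSquare_boundaryWeight_primesBelow (f : Finset ℕ → ℝ) :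
    weightedMeanSquare (boundaryWeight q) (boundaryCoweight N q) (Nat.primesBelow q) f
      = meanSquare (Nat.primesBelow q) f :=
  weightedMeanSquare_congr_weights (fun _ hp => if_pos (Nat.lt_of_mem_primesBelow hp))
    fun _ hp => if_neg (Nat.lt_of_mem_primesBelow hp).ne

lemma exists_weightedMeanSquare_boundarySign_mul_le (hk : 14 ≤ k) :
    ∃ C : ℝ, 0 < C ∧ ∀ {N q : ℕ} {E : ℝ} {odd : Bool}, (N : ℝ) ^ (k + 1) ≤ E →
      q ∈ Nat.primesBelow N →
      weightedMeanSquare (boundaryWeight q) (boundaryCoweight N q) (Nat.primesBelow N)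
          (fun S => boundarySign E (k + 1) odd q (S \ Nat.primesBelow q) *
            (-1) ^ (S ∩ Nat.primesBelow q).card)
        ≤ C * (Real.log q / q) / Real.log N ^ 2 := by
  obtain ⟨C₀, hC₀, hmain⟩ := exists_meanSquare_neg_one_pow_card_le
  obtain ⟨C₁, hC₁, hboundary⟩ := exists_weightedMeanSquare_boundarySign_le hk
  refine ⟨C₁ * C₀, by positivity, fun {N q E odd} hNE hq => ?_⟩
  have hq_prime := Nat.prime_of_mem_primesBelow hq
  have hqN := Nat.lt_of_mem_primesBelow hq
  have hlogq : 0 < Real.log q := Real.log_pos (by exact_mod_cast hq_prime.one_lt)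
  have hlog : Real.log q ≤ Real.log N :=
    Real.log_le_log (by exact_mod_cast hq_prime.pos) (by exact_mod_cast hqN.le)
  have hlogN : 0 < Real.log N := hlogq.trans_le hlog
  calc _ = weightedMeanSquare (boundaryWeight q) (boundaryCoweight N q)
          (Nat.primesBelow N \ Nat.primesBelow q) (boundarySign E (k + 1) odd q)
        * meanSquare (Nat.primesBelow q) (fun S => (-1) ^ S.card) := by
        rw [weightedMeanSquare_sdiff_mul_inter _ _ _ (fun S => (-1) ^ S.card)
          (Nat.primesBelow_mono hqN.le),
          weightedMeanSquare_boundaryWeight_primesBelow]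
    _ ≤ C₁ * (Real.log q / Real.log N) ^ 3 / q * (C₀ / Real.log q) := by
        gcongr
        · exact meanSquare_nonneg _ _
        · exact hboundary hNE (fun p => mem_primesBelow_sdiff.1)
            (mem_primesBelow_sdiff.2 ⟨hq_prime, le_rfl, hqN⟩)
        · exact hmain hq_prime.two_le
    _ = C₁ * C₀ * (Real.log q / q) / Real.log N ^ 2 * (Real.log q / Real.log N) := by
        field_simp
    _ ≤ C₁ * C₀ * (Real.log q / q) / Real.log N ^ 2 :=
        mul_le_of_le_one_right (by positivity) ((div_le_one hlogN).2 hlog)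

lemma exists_meanSquare_truncatedSign_le (hk : 14 ≤ k) :
    ∃ C : ℝ, 0 < C ∧ ∀ {N : ℕ} {E : ℝ} {odd : Bool}, 2 ≤ N → (N : ℝ) ^ (k + 1) ≤ E →
      meanSquare (Nat.primesBelow N) (truncatedSign E (k + 1) odd) ≤ C / Real.log N := by
  obtain ⟨C₀, hC₀, hmain⟩ := exists_meanSquare_neg_one_pow_card_le
  obtain ⟨C₁, hC₁, hboundary⟩ := exists_weightedMeanSquare_boundarySign_mul_le hk
  refine ⟨2 * (C₀ + 12 * C₁), by positivity, fun {N E odd} hN hNE => ?_⟩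
  have hlogN : 0 < Real.log N := Real.log_pos (by exact_mod_cast hN)
  set P := Nat.primesBelow N
  set g : ℕ → Finset ℕ → ℝ := fun q S =>
    boundarySign E (k + 1) odd q (S \ Nat.primesBelow q) * (-1) ^ (S ∩ Nat.primesBelow q).card
  have hsum : meanSquare P (fun S => ∑ q ∈ P, g q S) ≤ 4 * (3 * C₁ / Real.log N) := by
    calc meanSquare P (fun S => ∑ q ∈ P, g q S)
        ≤ 4 * ∑ q ∈ P, weightedMeanSquare (boundaryWeight q) (boundaryCoweight N q) P (g q) :=
          meanSquare_sum_le P g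
            (fun q _ p hp => boundaryWeight_pos (Nat.prime_of_mem_primesBelow hp) q)
            (fun q hq p _ => boundaryCoweight_pos (Nat.prime_of_mem_primesBelow hq)
              (Nat.lt_of_mem_primesBelow hq) p)
            fun T hT => sum_prod_boundaryWeight_le hN hT
      _ ≤ 4 * ∑ q ∈ P, C₁ * (Real.log q / q) / Real.log N ^ 2 := by
          gcongr with q hq
          exact hboundary hNE hq
      _ = 4 * (C₁ * (∑ q ∈ P, Real.log q / q) / Real.log N ^ 2) := by
          rw [← Finset.sum_div, ← Finset.mul_sum]
      _ ≤ 4 * (C₁ * (3 * Real.log N) / Real.log N ^ 2) := by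
          gcongr
          exact sum_log_div_le_three_mul_log hN
      _ = 4 * (3 * C₁ / Real.log N) := by field_simp
  calc meanSquare P (truncatedSign E (k + 1) odd)
      = meanSquare P (fun S => (-1) ^ S.card + ∑ q ∈ P, g q S) :=
        meanSquare_congr fun S hS => truncatedSign_eq_sum_primesBelow hS
    _ ≤ 2 * (meanSquare P (fun S => (-1) ^ S.card)
        + meanSquare P fun S => ∑ q ∈ P, g q S) := meanSquare_add_le _ _ _
    _ ≤ 2 * (C₀ / Real.log N + 4 * (3 * C₁ / Real.log N)) := by
        gcongr
        exact hmain hN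
    _ = 2 * (C₀ + 12 * C₁) / Real.log N := by ring

end Boundary

/-! ### Mean squares over integers -/

section Divisors

variable {P : Finset ℕ}

lemma prod_primes_dvd_prod_primes_iff {S T : Finset ℕ} (hS : ∀ p ∈ S, p.Prime)
    (hT : ∀ p ∈ T, p.Prime) : ∏ p ∈ T, p ∣ ∏ p ∈ S, p ↔ T ⊆ S := by
  refine ⟨fun h => ?_, fun h => Finset.prod_dvd_prod_of_subset _ _ _ h⟩
  rw [← Nat.primeFactors_prod hT, ← Nat.primeFactors_prod hS]
  exact Nat.primeFactors_mono h (Finset.prod_ne_zero_iff.2 fun p hp => (hS p hp).ne_zero)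

lemma sum_divisors_prod_primes {M : Type*} [AddCommMonoid M] (hP : ∀ p ∈ P, p.Prime)
    (F : ℕ → M) : ∑ d ∈ (∏ p ∈ P, p).divisors, F d = ∑ S ∈ P.powerset, F (∏ p ∈ S, p) := by
  have hP₀ : ∏ p ∈ P, p ≠ 0 := Finset.prod_ne_zero_iff.2 fun p hp => (hP p hp).ne_zero
  have hsq : ∀ d ∈ (∏ p ∈ P, p).divisors, ∏ p ∈ d.primeFactors, p = d := fun d hd =>
    Nat.prod_primeFactors_of_squarefree
      ((squarefree_prod_primes hP).squarefree_of_dvd (Nat.dvd_of_mem_divisors hd))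
  refine Finset.sum_nbij' Nat.primeFactors (fun S => ∏ p ∈ S, p) (fun d hd => ?_) (fun S hS => ?_)
    hsq (fun S hS => ?_) fun d hd => by rw [hsq d hd]
  · rw [Finset.mem_powerset, ← Nat.primeFactors_prod hP]
    exact Nat.primeFactors_mono (Nat.dvd_of_mem_divisors hd) hP₀
  · exact Nat.mem_divisors.2
      ⟨Finset.prod_dvd_prod_of_subset _ _ _ (Finset.mem_powerset.1 hS), hP₀⟩
  · exact Nat.primeFactors_prod fun p hp => hP p (Finset.mem_powerset.1 hS hp)

lemma sum_filter_dvd_div_eq_multipleSum (hP : ∀ p ∈ P, p.Prime) (α : ℕ → ℝ) {T : Finset ℕ}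
    (hT : T ⊆ P) :
    ∑ m ∈ (∏ p ∈ P, p).divisors.filter (∏ p ∈ T, p ∣ ·), α m / m
      = multipleSum P (fun S => α (∏ p ∈ S, p)) T := by
  have hIcc : Finset.Icc T P = P.powerset.filter (∏ p ∈ T, p ∣ ∏ p ∈ ·, p) := by
    ext S
    rw [Finset.mem_Icc, Finset.mem_filter, Finset.mem_powerset, and_comm]
    exact and_congr_right fun hS =>
      (prod_primes_dvd_prod_primes_iff (fun p hp => hP p (hS hp)) fun p hp => hP p (hT hp)).symm
  rw [Finset.sum_filter, sum_divisors_prod_primes hP, multipleSum, hIcc, Finset.sum_filter]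
  simp only [Nat.cast_prod]

lemma sum_divisors_mul_sq_eq_meanSquare (hP : ∀ p ∈ P, p.Prime) (α : ℕ → ℝ) :
    ∑ d ∈ (∏ p ∈ P, p).divisors,
        (d : ℝ) * (∑ m ∈ (∏ p ∈ P, p).divisors.filter (d ∣ ·), α m / m) ^ 2
      = meanSquare P fun S => α (∏ p ∈ S, p) := by
  rw [sum_divisors_prod_primes hP, meanSquare_eq_sum]
  refine Finset.sum_congr rfl fun T hT => ?_
  rw [sum_filter_dvd_div_eq_multipleSum hP α (Finset.mem_powerset.1 hT), Nat.cast_prod]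

lemma sum_Icc_mul_sq_le_sum_divisors {n Y : ℕ} (hn : n ≠ 0) {α : ℕ → ℝ}
    (hα : ∀ m, α m ≠ 0 → m ∣ n ∧ m ≤ Y) :
    ∑ d ∈ Finset.Icc 1 Y, (d : ℝ) * (∑ m ∈ (Finset.Icc 1 Y).filter (d ∣ ·), α m / m) ^ 2
      ≤ ∑ d ∈ n.divisors, (d : ℝ) * (∑ m ∈ n.divisors.filter (d ∣ ·), α m / m) ^ 2 := by
  have hinner : ∀ d, ∑ m ∈ (Finset.Icc 1 Y).filter (d ∣ ·), α m / m
      = ∑ m ∈ n.divisors.filter (d ∣ ·), α m / m := fun d => by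
    have hzero : ∀ m, (m ∣ n → ¬m ≤ Y) → α m / (m : ℝ) = 0 := fun m hm => by
      rw [not_imp_comm.1 (hα m) fun h => hm h.1 h.2, zero_div]
    refine Finset.sum_congr_of_eq_on_inter (fun m hm hm' => hzero m fun hmn => ?_)
      (fun m hm hm' => hzero m fun hmn hmY => ?_) fun m _ _ => rfl
    · exact absurd (Finset.mem_filter.2
        ⟨Nat.mem_divisors.2 ⟨hmn, hn⟩, (Finset.mem_filter.1 hm).2⟩) hm'
    · exact hm' (Finset.mem_filter.2 ⟨Finset.mem_Icc.2
        ⟨Nat.pos_of_dvd_of_pos hmn (Nat.pos_of_ne_zero hn), hmY⟩, (Finset.mem_filter.1 hm).2⟩)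
  simp only [hinner]
  rw [← Finset.sum_filter_add_sum_filter_not (Finset.Icc 1 Y) (· ∈ n.divisors),
    Finset.sum_eq_zero (s := (Finset.Icc 1 Y).filter (· ∉ n.divisors)) fun d hd => ?_, add_zero]
  · refine Finset.sum_le_sum_of_subset_of_nonneg (fun d hd => (Finset.mem_filter.1 hd).2)
      fun d _ _ => by positivity
  · have hempty : n.divisors.filter (d ∣ ·) = ∅ := Finset.filter_eq_empty_iff.2 fun m hm hdm =>
      (Finset.mem_filter.1 hd).2
        (Nat.mem_divisors.2 ⟨hdm.trans (Nat.dvd_of_mem_divisors hm), hn⟩)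
    simp [hempty]

end Divisors

/-! ### The vector sieve weights -/

section AlphaMinus

variable {w z D E : ℝ} {S : Finset ℕ}

lemma mem_primesBelow_ceil {x : ℝ} {p : ℕ} : p ∈ Nat.primesBelow ⌈x⌉₊ ↔ (p : ℝ) < x ∧ p.Prime := by
  rw [Nat.mem_primesBelow, Nat.lt_ceil]

lemma gcdPart_prod {lo hi : ℝ} (hS : ∀ p ∈ S, p.Prime) :
    gcdPart lo hi (∏ p ∈ S, p) = ∏ p ∈ S.filter (fun p : ℕ => lo ≤ p ∧ p < hi), p := by
  rw [gcdPart, Nat.primeFactors_prod hS]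

lemma dividesPrimorial_iff_dvd_prod {m : ℕ} :
    dividesPrimorial z m ↔ m ∣ ∏ p ∈ Nat.primesBelow ⌈z⌉₊, p := by
  have hprime : ∀ p ∈ Nat.primesBelow ⌈z⌉₊, p.Prime := fun p => Nat.prime_of_mem_primesBelow
  constructor
  · rintro ⟨hm, hmz⟩
    rw [← Nat.prod_primeFactors_of_squarefree hm]
    exact Finset.prod_dvd_prod_of_subset _ _ _ fun p hp =>
      mem_primesBelow_ceil.2 ⟨hmz p hp, Nat.prime_of_mem_primeFactors hp⟩
  · intro hm
    refine ⟨(squarefree_prod_primes hprime).squarefree_of_dvd hm, fun p hp => ?_⟩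
    have hp := Nat.primeFactors_mono hm
      (Finset.prod_ne_zero_iff.2 fun p hp => (hprime p hp).ne_zero) hp
    rw [Nat.primeFactors_prod hprime] at hp
    exact (mem_primesBelow_ceil.1 hp).1

lemma alphaMinus_prod (hS : S ⊆ Nat.primesBelow ⌈z⌉₊) :
    alphaMinus w z D E (∏ p ∈ S, p)
      = truncatedSign D 2 true (S \ Nat.primesBelow ⌈w⌉₊)
          * truncatedSign E 30 false (S ∩ Nat.primesBelow ⌈w⌉₊)
        + truncatedSign D 2 false (S \ Nat.primesBelow ⌈w⌉₊)
          * truncatedSign E 30 true (S ∩ Nat.primesBelow ⌈w⌉₊)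
        - truncatedSign D 2 true (S \ Nat.primesBelow ⌈w⌉₊)
          * truncatedSign E 30 true (S ∩ Nat.primesBelow ⌈w⌉₊) := by
  have hprime : ∀ p ∈ S, p.Prime := fun p hp => Nat.prime_of_mem_primesBelow (hS hp)
  have hlarge : S.filter (fun p : ℕ => w ≤ p ∧ p < z) = S \ Nat.primesBelow ⌈w⌉₊ := by
    ext p
    simp only [Finset.mem_filter, Finset.mem_sdiff, mem_primesBelow_ceil, not_and', not_lt]
    exact and_congr_right fun hp =>
      ⟨fun h _ => h.1, fun h => ⟨h (hprime p hp), (mem_primesBelow_ceil.1 (hS hp)).1⟩⟩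
  have hsmall : S.filter (fun p : ℕ => (0 : ℝ) ≤ p ∧ p < w) = S ∩ Nat.primesBelow ⌈w⌉₊ := by
    ext p
    simp only [Finset.mem_filter, Finset.mem_inter, mem_primesBelow_ceil]
    exact and_congr_right fun hp => ⟨fun h => ⟨h.2, hprime p hp⟩, fun h => ⟨p.cast_nonneg, h.1⟩⟩
  have hlambda : ∀ odd, sieveWeight w z D 2 odd (gcdPart w z (∏ p ∈ S, p))
      = truncatedSign D 2 odd (S \ Nat.primesBelow ⌈w⌉₊) := fun odd => by
    rw [gcdPart_prod hprime, sieveWeight_prod (fun p hp => hprime p (Finset.mem_filter.1 hp).1)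
      fun p hp => (Finset.mem_filter.1 hp).2, hlarge]
  have hrho : ∀ odd, sieveWeight 0 w E 30 odd (gcdPart 0 w (∏ p ∈ S, p))
      = truncatedSign E 30 odd (S ∩ Nat.primesBelow ⌈w⌉₊) := fun odd => by
    rw [gcdPart_prod hprime, sieveWeight_prod (fun p hp => hprime p (Finset.mem_filter.1 hp).1)
      fun p hp => (Finset.mem_filter.1 hp).2, hsmall]
  rw [alphaMinus,
    if_pos (dividesPrimorial_iff_dvd_prod.2 (Finset.prod_dvd_prod_of_subset _ _ _ hS)),
    one_mul, hlambda, hlambda, hrho, hrho]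

lemma prod_le_of_truncatedSign_ne_zero {k : ℕ} {odd : Bool} (h : truncatedSign E (k + 1) odd S ≠ 0)
    (hE : 1 ≤ E) (hS : ∀ p ∈ S, 1 ≤ p ∧ (p : ℝ) ≤ E) : ∏ p ∈ S, (p : ℝ) ≤ E := by
  rw [truncatedSign, ite_ne_right_iff] at h
  exact h.1.prod_le hE (fun p hp => (hS p hp).2) fun p hp => (hS p hp).1

lemma dvd_and_le_of_alphaMinus_ne_zero (hD : 1 ≤ D) (hzD : z ≤ D) (hE : 1 ≤ E)
    (hwE : w ≤ E) {m : ℕ} (hm : alphaMinus w z D E m ≠ 0) :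
    m ∣ ∏ p ∈ Nat.primesBelow ⌈z⌉₊, p ∧ m ≤ ⌊D * E⌋₊ := by
  have hdvd : dividesPrimorial z m := by
    by_contra h
    exact hm (by rw [alphaMinus, if_neg h, zero_mul])
  refine ⟨dividesPrimorial_iff_dvd_prod.1 hdvd, Nat.le_floor ?_⟩
  have hS : m.primeFactors ⊆ Nat.primesBelow ⌈z⌉₊ := fun p hp =>
    mem_primesBelow_ceil.2 ⟨hdvd.2 p hp, Nat.prime_of_mem_primeFactors hp⟩
  have hm_prod : m = ∏ p ∈ m.primeFactors, p := (Nat.prod_primeFactors_of_squarefree hdvd.1).symm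
  rw [hm_prod, alphaMinus_prod hS] at hm
  set U := Nat.primesBelow ⌈w⌉₊
  obtain ⟨odd₁, odd₂, hlambda, hrho⟩ : ∃ odd₁ odd₂, truncatedSign D 2 odd₁ (m.primeFactors \ U) ≠ 0
      ∧ truncatedSign E 30 odd₂ (m.primeFactors ∩ U) ≠ 0 := by
    by_contra! h
    refine hm ?_
    rw [mul_eq_zero.2 (or_iff_not_imp_left.2 (h true false)),
      mul_eq_zero.2 (or_iff_not_imp_left.2 (h false true)),
      mul_eq_zero.2 (or_iff_not_imp_left.2 (h true true))]
    simp
  have hlarge := prod_le_of_truncatedSign_ne_zero hlambda hD fun p hp => by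
    have hp := hS (Finset.mem_sdiff.1 hp).1
    exact ⟨(Nat.prime_of_mem_primesBelow hp).one_le, (mem_primesBelow_ceil.1 hp).1.le.trans hzD⟩
  have hsmall := prod_le_of_truncatedSign_ne_zero hrho hE fun p hp => by
    have hp := (Finset.mem_inter.1 hp).2
    exact ⟨(Nat.prime_of_mem_primesBelow hp).one_le, (mem_primesBelow_ceil.1 hp).1.le.trans hwE⟩
  calc (m : ℝ) = (∏ p ∈ m.primeFactors \ U, (p : ℝ)) * ∏ p ∈ m.primeFactors ∩ U, (p : ℝ) := by
        rw [mul_comm, Finset.prod_inter_mul_prod_sdiff, ← Nat.cast_prod, ← hm_prod]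
    _ ≤ D * E := by gcongr

end AlphaMinus

lemma exists_meanSquare_truncatedSign_sdiff_mul_inter_le :
    ∃ C : ℝ, 0 < C ∧ ∀ {M N : ℕ} {D E : ℝ} (odd₁ odd₂ : Bool), 2 ≤ M → M ≤ N → (M : ℝ) ^ 30 ≤ E →
      meanSquare (Nat.primesBelow N) (fun S => truncatedSign D 2 odd₁ (S \ Nat.primesBelow M)
          * truncatedSign E 30 odd₂ (S ∩ Nat.primesBelow M))
        ≤ C * (Real.log N / Real.log M) ^ 4 / Real.log M := by
  obtain ⟨C₁, hC₁, hlambda⟩ := exists_meanSquare_le_log_div_log_pow_four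
  obtain ⟨C₂, hC₂, hrho⟩ := exists_meanSquare_truncatedSign_le (k := 29) (by norm_num)
  refine ⟨C₁ * C₂, by positivity, fun {M N D E} odd₁ odd₂ hM hMN hME => ?_⟩
  rw [meanSquare_sdiff_mul_inter _ _ (Nat.primesBelow_mono hMN)]
  calc _ ≤ C₁ * (Real.log N / Real.log M) ^ 4 * (C₂ / Real.log M) := by
        gcongr
        · exact meanSquare_nonneg _ _
        · exact hlambda hM hMN (fun p => mem_primesBelow_sdiff.1)
            fun S _ => abs_truncatedSign_le_one D 2 odd₁ S
        · exact hrho hM hME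
    _ = _ := by ring

lemma exists_meanSquare_alphaMinus_le :
    ∃ C : ℝ, 0 < C ∧ ∀ {w z D E : ℝ}, 2 ≤ ⌈w⌉₊ → w ≤ z → (⌈w⌉₊ : ℝ) ^ 30 ≤ E →
      meanSquare (Nat.primesBelow ⌈z⌉₊) (fun S => alphaMinus w z D E (∏ p ∈ S, p))
        ≤ C * (Real.log ⌈z⌉₊ / Real.log ⌈w⌉₊) ^ 4 / Real.log ⌈w⌉₊ := by
  obtain ⟨C, hC, hprod⟩ := exists_meanSquare_truncatedSign_sdiff_mul_inter_le
  refine ⟨10 * C, by positivity, fun {w z D E} hw hwz hwE => ?_⟩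
  set P := Nat.primesBelow ⌈z⌉₊
  set f : Bool → Bool → Finset ℕ → ℝ := fun odd₁ odd₂ S =>
    truncatedSign D 2 odd₁ (S \ Nat.primesBelow ⌈w⌉₊)
      * truncatedSign E 30 odd₂ (S ∩ Nat.primesBelow ⌈w⌉₊)
  set B := C * (Real.log ⌈z⌉₊ / Real.log ⌈w⌉₊) ^ 4 / Real.log ⌈w⌉₊
  have hbound : ∀ odd₁ odd₂, meanSquare P (f odd₁ odd₂) ≤ B := fun odd₁ odd₂ =>
    hprod odd₁ odd₂ hw (Nat.ceil_mono hwz) hwE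
  calc meanSquare P (fun S => alphaMinus w z D E (∏ p ∈ S, p))
      = meanSquare P (fun S => (f true false S + f false true S) + -f true true S) :=
        meanSquare_congr fun S hS => (alphaMinus_prod hS).trans (sub_eq_add_neg _ _)
    _ ≤ 2 * (meanSquare P (fun S => f true false S + f false true S)
        + meanSquare P (f true true)) :=
        (meanSquare_add_le _ _ _).trans_eq (by rw [meanSquare_neg])
    _ ≤ 2 * (2 * (meanSquare P (f true false) + meanSquare P (f false true))
        + meanSquare P (f true true)) := by
        gcongr
        exact meanSquare_add_le _ _ _
    _ ≤ 2 * (2 * (B + B) + B) := by gcongr <;> apply hbound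
    _ = 10 * C * (Real.log ⌈z⌉₊ / Real.log ⌈w⌉₊) ^ 4 / Real.log ⌈w⌉₊ := by ring

lemma log_ceil_le {x : ℝ} (hx : 2 ≤ x) : Real.log ⌈x⌉₊ ≤ 2 * Real.log x := by
  have hceil : (⌈x⌉₊ : ℝ) < x + 1 := Nat.ceil_lt_add_one (by linarith)
  rw [← Nat.cast_ofNat (n := 2), ← Real.log_pow]
  have : 0 < ⌈x⌉₊ := Nat.ceil_pos.2 (by linarith)
  exact Real.log_le_log (by exact_mod_cast this) (by nlinarith)

lemma exists_sum_alphaMinus_le :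
    ∃ C : ℝ, 0 < C ∧ ∀ {w z D E : ℝ}, 2 ≤ w → w ≤ z → z ≤ D → w ^ 60 ≤ E →
      ∑ d ∈ Finset.Icc 1 ⌊D * E⌋₊,
          (d : ℝ) * (∑ m ∈ (Finset.Icc 1 ⌊D * E⌋₊).filter (d ∣ ·), alphaMinus w z D E m / m) ^ 2
        ≤ C * (Real.log z / Real.log w) ^ 4 / Real.log w := by
  obtain ⟨C, hC, hmean⟩ := exists_meanSquare_alphaMinus_le
  refine ⟨16 * C, by positivity, fun {w z D E} hw hwz hzD hwE => ?_⟩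
  have hceil : 2 ≤ ⌈w⌉₊ := by exact_mod_cast hw.trans (Nat.le_ceil w)
  have hceil_sq : (⌈w⌉₊ : ℝ) ≤ w ^ 2 := by
    nlinarith [Nat.ceil_lt_add_one (show 0 ≤ w by linarith)]
  have hceil_pow : (⌈w⌉₊ : ℝ) ^ 30 ≤ E := by
    calc (⌈w⌉₊ : ℝ) ^ 30 ≤ (w ^ 2) ^ 30 := by gcongr
      _ = w ^ 60 := by ring
      _ ≤ E := hwE
  have hwE' : w ≤ E := (le_self_pow₀ (by linarith) (by norm_num)).trans hwE
  have hprime : ∀ p ∈ Nat.primesBelow ⌈z⌉₊, p.Prime := fun p => Nat.prime_of_mem_primesBelow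
  have hlogw : 0 < Real.log w := Real.log_pos (by linarith)
  have hlogz : 0 ≤ Real.log z := Real.log_nonneg (by linarith)
  calc _ ≤ meanSquare (Nat.primesBelow ⌈z⌉₊) (fun S => alphaMinus w z D E (∏ p ∈ S, p)) := by
        rw [← sum_divisors_mul_sq_eq_meanSquare hprime]
        exact sum_Icc_mul_sq_le_sum_divisors
          (Finset.prod_ne_zero_iff.2 fun p hp => (hprime p hp).ne_zero) fun m =>
            dvd_and_le_of_alphaMinus_ne_zero (by linarith) hzD (by linarith) hwE'
    _ ≤ C * (Real.log ⌈z⌉₊ / Real.log ⌈w⌉₊) ^ 4 / Real.log ⌈w⌉₊ := hmean hceil hwz hceil_pow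
    _ ≤ C * (2 * Real.log z / Real.log w) ^ 4 / Real.log w := by
        have := log_ceil_le (hw.trans hwz)
        have : Real.log w ≤ Real.log ⌈w⌉₊ := Real.log_le_log (by linarith) (Nat.le_ceil w)
        gcongr
    _ = _ := by ring

theorem alpha_minus_mean_square_general {a b e : ℝ} (ha : 0 < a) (hab : a ≤ b) (he : 0 < e) :
    ∃ δ₀ : ℝ, 0 < δ₀ ∧ ∀ δ : ℝ, δ ∈ Set.Ioo 0 δ₀ →
      ∃ C : ℝ, 0 < C ∧ ∃ X₀ : ℝ, ∀ X : ℝ, X₀ ≤ X →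
        ∑ d ∈ Finset.Icc 1 ⌊X ^ b * X ^ e⌋₊,
            (d : ℝ) * (∑ m ∈ (Finset.Icc 1 ⌊X ^ b * X ^ e⌋₊).filter (fun m => d ∣ m),
              alphaMinus (X ^ δ) (X ^ a) (X ^ b) (X ^ e) m / m) ^ 2 ≤
          C / Real.log X := by
  obtain ⟨C, hC, hsum⟩ := exists_sum_alphaMinus_le
  refine ⟨min a (e / 60), by positivity, fun δ ⟨hδ, hδ₀⟩ => ?_⟩
  obtain ⟨hδa, hδe⟩ := lt_min_iff.1 hδ₀
  refine ⟨C * (a / δ) ^ 4 / δ, by positivity, max 2 (2 ^ (1 / δ)), fun X hX => ?_⟩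
  have hX₁ : 1 < X := one_lt_two.trans_le ((le_max_left _ _).trans hX)
  have hX₀ : 0 < X := zero_lt_one.trans hX₁
  have hlogX : 0 < Real.log X := Real.log_pos hX₁
  have hw : 2 ≤ X ^ δ := by
    have := Real.rpow_le_rpow (by positivity) ((le_max_right _ _).trans hX) hδ.le
    rwa [← Real.rpow_mul zero_le_two, one_div_mul_cancel hδ.ne', Real.rpow_one] at this
  have hwE : (X ^ δ) ^ 60 ≤ X ^ e := by
    rw [← Real.rpow_mul_natCast hX₀.le]
    exact Real.rpow_le_rpow_of_exponent_le hX₁.le (by push_cast; linarith)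
  refine (hsum hw (Real.rpow_le_rpow_of_exponent_le hX₁.le hδa.le)
    (Real.rpow_le_rpow_of_exponent_le hX₁.le hab) hwE).trans_eq ?_
  rw [Real.log_rpow hX₀, Real.log_rpow hX₀, mul_div_mul_right _ _ hlogX.ne', div_mul_eq_div_div]

/-- Mean square bound for the weights `α⁻`: there is `δ₀ > 0` such that for
`δ ∈ (0, δ₀)` and all sufficiently large `X`, with `D = X^{5/9}`, `z = X^{5/36}`,
`w = X^δ`, `E = X^{1/1000}`,
`Σ_{d ≤ DE} d·(Σ_{m ≤ DE, d ∣ m} α_m⁻/m)² ≤ C(δ)/log X`. -/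
theorem alpha_minus_mean_square :
    ∃ δ₀ : ℝ, 0 < δ₀ ∧ ∀ δ : ℝ, δ ∈ Set.Ioo 0 δ₀ →
      ∃ C : ℝ, 0 < C ∧ ∃ X₀ : ℝ, ∀ X : ℝ, X₀ ≤ X →
        ∑ d ∈ Finset.Icc 1 ⌊X ^ ((5 : ℝ) / 9) * X ^ ((1 : ℝ) / 1000)⌋₊,
            (d : ℝ) * (∑ m ∈ (Finset.Icc 1 ⌊X ^ ((5 : ℝ) / 9) * X ^ ((1 : ℝ) / 1000)⌋₊).filter
                (fun m => d ∣ m),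
              alphaMinus (X ^ δ) (X ^ ((5 : ℝ) / 36)) (X ^ ((5 : ℝ) / 9))
                  (X ^ ((1 : ℝ) / 1000)) m / m) ^ 2 ≤
          C / Real.log X :=
  alpha_minus_mean_square_general (by norm_num) (by norm_num) (by norm_num)
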